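/- arXiv:1902.06763 — 2 statements merged into one kernel-verified Lean document; each statement's English description precedes it below -/
import Mathlib

section
/- Let $n\ge 2$, let $\alpha=(\alpha_1,\dots,\alpha_n)$ be real numbers with $\alpha_i>0$ for all $i$ and $\alpha_i<\alpha_1+\cdots+\alpha_{i-1}$ for every $2\le i\le n$, and let $s=(s_1,\dots,s_n)\in\mathbb{C}^n$ satisfy $\Re(s_j+\cdots+s_n)>n-j+1$ for every $1\le j\le n$. Then the integral $$Y_n(\alpha;s)=\int_{\prod_{i=1}^n[\alpha_i,\infty)}\ \prod_{i=1}^n (y_1+\cdots+y_i)^{-s_i}\,dy=\int_{[0,\infty)^n}\ \prod_{i=1}^n (x_1+\cdots+x_i+\alpha_1+\cdots+\alpha_i)^{-s_i}\,dx$$ converges absolutely. For $k=(k_2,\dots,k_n)\in\mathbb{N}^{n-1}$, where $\mathbb{N}=\{0,1,2,\dots\}$, put $$F(k)=\frac{\prod_{j=2}^n\binom{-\sum_{i=j}^n s_i+(n-j+1)-\sum_{i=j+1}^n k_i}{k_j}\;\alpha_1^{-\sum_{i=1}^n s_i+n-\sum_{i=2}^n k_i}\;\prod_{j=2}^n\alpha_j^{k_j}}{\prod_{j=1}^n\left(\sum_{i=j}^n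 s_i-(n-j+1)+\sum_{i=j+1}^n k_i\right)},$$ where $\binom{z}{k}=z(z-1)\cdots(z-k+1)/k!$, complex powers of positive reals are principal, and empty sums are $0$. Then $$Y_n(\alpha;s)=\sum_{k_n\in\mathbb{N}}\ \sum_{k_{n-1}\in\mathbb{N}}\cdots\sum_{k_2\in\mathbb{N}}F(k_2,\dots,k_n),$$ as an iterated series ($k_2$ innermost, $k_n$ outermost) in which each of the successive single series converges absolutely. If moreover $\alpha_2+\cdots+\alpha_n<\alpha_1$ (for $n=2$ this is already assumed), then the multiple series $\sum_{k\in\mathbb{N}^{n-1}}F(k)$ converges absolutely, with sum $Y_n(\alpha;s)$. -/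
noncomputable section

namespace HurwitzIntegral

/-- The integrand `∏ i, (y_1 + ⋯ + y_i)^(-s_i)`, with `n = m + 1` variables. -/
def integrand {m : ℕ} (s : Fin (m + 1) → ℂ) (y : Fin (m + 1) → ℝ) : ℂ :=
  ∏ i, (((∑ j ∈ Finset.Iic i, y j : ℝ) : ℂ)) ^ (-(s i))

/-- The domain of integration `∏ i, [α_i, ∞)`. -/
def domain {m : ℕ} (α : Fin (m + 1) → ℝ) : Set (Fin (m + 1) → ℝ) :=
  Set.univ.pi fun i => Set.Ici (α i)

/-- The integral function `Y_n(α; s) = ∫_{∏ [α_i, ∞)} ∏ i, (y_1 + ⋯ + y_i)^(-s_i) dy`. -/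
def Y {m : ℕ} (α : Fin (m + 1) → ℝ) (s : Fin (m + 1) → ℂ) : ℂ :=
  ∫ y in domain α, integrand s y

/-- `∑_{i ≥ j} s_i - (n - j + 1) + ∑_{i ≥ j + 1} k_i` for `1 ≤ j ≤ n`. Indices are shifted:
`j : Fin (m + 1)` stands for the `(j + 1)`-st variable out of `n = m + 1`, and
`k = (k_2, …, k_n)` is indexed by `Fin m`, with `k i` standing for `k_{i + 2}`. -/
def tailExp {m : ℕ} (s : Fin (m + 1) → ℂ) (k : Fin m → ℕ) (j : Fin (m + 1)) : ℂ :=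
  (∑ i ∈ Finset.Ici j, s i) - ((m : ℂ) + 1 - ((j : ℕ) : ℂ))
    + ∑ i ∈ Finset.univ.filter (fun i : Fin m => (j : ℕ) ≤ (i : ℕ)), (k i : ℂ)

/-- The term of the multiple series at `k = (k_2, …, k_n)`; `j.succ` for `j : Fin m` runs through
the variables number `2, …, n`. -/
def term {m : ℕ} (α : Fin (m + 1) → ℝ) (s : Fin (m + 1) → ℂ) (k : Fin m → ℕ) : ℂ :=
  (∏ j : Fin m, Ring.choose (-(tailExp s k j.succ)) (k j))
    * (α 0 : ℂ) ^ (-(tailExp s k 0))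
    * (∏ j : Fin m, (α j.succ : ℂ) ^ (k j))
    / ∏ j : Fin (m + 1), tailExp s k j

/-- `S` is the iterated sum `∑_{k_m} (⋯ (∑_{k_1} F(k_1, …, k_m)))`, the first index innermost and
the last index outermost, each of the single series being absolutely convergent. -/
def IteratedHasSum : (m : ℕ) → ((Fin m → ℕ) → ℂ) → ℂ → Prop
  | 0, F, S => F Fin.elim0 = S
  | m + 1, F, S => ∃ g : ℕ → ℂ,
      (∀ l : ℕ, IteratedHasSum m (fun k => F (Fin.snoc (α := fun _ => ℕ) k l)) (g l)) ∧
        HasSum g S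

end HurwitzIntegral

end

/-!
Integrating out `y_n` replaces the factor `(y_1 + ⋯ + y_n)^(-s_n)` by
`(y_1 + ⋯ + y_{n-1} + α_n)^(-(s_n - 1)) / (s_n - 1)`. On the remaining domain
`|α_n| < α_1 + ⋯ + α_{n-1} ≤ y_1 + ⋯ + y_{n-1}`, so Newton's binomial series in `α_n` applies, and
its `l`-th term is absorbed by changing the exponent `s_{n-1}` to `s_{n-1} + s_n - 1 + l`. Induction
on `n` gives the iterated series, for parameters `α_2, …, α_n` of arbitrary signs.

This freedom of signs gives the absolute convergence of the multiple series. For the parameters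
`β = (α_1, -|α_2|, …, -|α_n|)` and suitable real exponents all terms are nonnegative, so convergence
of the iterated series means absolute summability, and the condition
`|β_i| < β_1 + ⋯ + β_{i-1}` for all `i ≥ 2` follows from `|α_2| + ⋯ + |α_n| < α_1`. The terms for
`α` and `s` are dominated by a constant multiple of these.
-/

noncomputable section

namespace HurwitzIntegral

open MeasureTheory

section OneVariable

variable {S a : ℝ} {z : ℂ}

lemma setIntegral_Ici_comp_add_left {E : Type*} [NormedAddCommGroup E] [NormedSpace ℝ E]
    (f : ℝ → E) (S a : ℝ) : ∫ t in Set.Ici a, f (S + t) = ∫ x in Set.Ioi (S + a), f x := by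
  have h := (measurePreserving_add_left volume S).setIntegral_preimage_emb
    (measurableEmbedding_addLeft S) f (Set.Ioi (S + a))
  rwa [Set.preimage_const_add_Ioi, add_sub_cancel_left, ← integral_Ici_eq_integral_Ioi] at h

lemma integrableOn_Ici_add_cpow (h : 0 < S + a) (hz : 1 < z.re) :
    IntegrableOn (fun t : ℝ => ((S + t : ℝ) : ℂ) ^ (-z)) (Set.Ici a) := by
  have h' := ((measurePreserving_add_left volume S).integrableOn_comp_preimage
    (measurableEmbedding_addLeft S)).2
    (integrableOn_Ioi_cpow_of_lt (a := -z) (by simpa using hz) h)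
  rw [Set.preimage_const_add_Ioi, add_sub_cancel_left] at h'
  exact (integrableOn_Ici_iff_integrableOn_Ioi).2 h'

lemma integral_Ici_add_cpow (h : 0 < S + a) (hz : 1 < z.re) :
    ∫ t in Set.Ici a, ((S + t : ℝ) : ℂ) ^ (-z) = ((S + a : ℝ) : ℂ) ^ (-(z - 1)) / (z - 1) := by
  rw [setIntegral_Ici_comp_add_left (fun x : ℝ => (x : ℂ) ^ (-z)),
    integral_Ioi_cpow_of_lt (by simpa using hz) h, show -z + 1 = -(z - 1) by ring,
    neg_div_neg_eq]

lemma integral_Ici_norm_add_cpow (h : 0 < S + a) (hz : 1 < z.re) :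
    ∫ t in Set.Ici a, ‖((S + t : ℝ) : ℂ) ^ (-z)‖ = (S + a) ^ (-(z.re - 1)) / (z.re - 1) := by
  have hnorm : ∫ x in Set.Ioi (S + a), ‖(x : ℂ) ^ (-z)‖ = ∫ x in Set.Ioi (S + a), x ^ (-z.re) :=
    setIntegral_congr_fun measurableSet_Ioi fun x hx => by
      simp [Complex.norm_cpow_eq_rpow_re_of_pos (h.trans hx)]
  rw [setIntegral_Ici_comp_add_left (fun x : ℝ => ‖(x : ℂ) ^ (-z)‖), hnorm,
    integral_Ioi_rpow_of_lt (by simpa using hz) h, show -z.re + 1 = -(z.re - 1) by ring,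
    neg_div_neg_eq]

lemma exists_rpow_neg_add_le {A x : ℝ} (hA : 0 < A) (hAa : 0 < A + a) (hx : 0 ≤ x) :
    ∃ C, ∀ S, A ≤ S → (S + a) ^ (-x) ≤ C * S ^ (-x) := by
  set c := min 1 ((A + a) / A)
  have hc : 0 < c := lt_min one_pos (div_pos hAa hA)
  refine ⟨c ^ (-x), fun S hS => ?_⟩
  have hle : c * S ≤ S + a := by
    rcases le_total 0 a with ha | ha
    · nlinarith [min_le_left 1 ((A + a) / A)]
    · calc c * S ≤ (A + a) / A * S := by gcongr; exacts [hA.le.trans hS, min_le_right _ _]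
        _ = S + a * (S / A) := by field_simp
        _ ≤ S + a := by nlinarith [(one_le_div hA).2 hS]
  have hS0 : 0 < S := hA.trans_le hS
  rw [← Real.mul_rpow hc.le hS0.le]
  exact Real.rpow_le_rpow_of_nonpos (mul_pos hc hS0) hle (neg_nonpos.2 hx)

lemma hasSum_choose_mul_pow (w : ℂ) {x : ℂ} (hx : ‖x‖ < 1) :
    HasSum (fun l : ℕ => Ring.choose w l * x ^ l) ((1 + x) ^ w) := by
  have h := (Complex.one_add_cpow_hasFPowerSeriesOnBall_zero (a := w)).hasSum (y := x)
    (by rwa [← ENNReal.ofReal_one, Metric.eball_ofReal, mem_ball_zero_iff])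
  simpa only [zero_add, binomialSeries_apply, List.ofFn_const, List.prod_replicate,
    smul_eq_mul] using h

lemma hasSum_choose_mul_pow_mul_cpow (haS : |a| < S) (w : ℂ) :
    HasSum (fun l : ℕ => Ring.choose w l * (a : ℂ) ^ l * (S : ℂ) ^ (w - l))
      (((S + a : ℝ) : ℂ) ^ w) := by
  have hS : 0 < S := (abs_nonneg a).trans_lt haS
  have hSC : (S : ℂ) ≠ 0 := Complex.ofReal_ne_zero.2 hS.ne'
  have hnorm : ‖(a / S : ℂ)‖ < 1 := by simpa [abs_of_pos hS] using (div_lt_one hS).2 haS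
  have hfactor : ((S + a : ℝ) : ℂ) ^ w = (S : ℂ) ^ w * (1 + a / S : ℂ) ^ w := by
    have hpos : 0 ≤ 1 + a / S := by
      rw [one_add_div hS.ne']
      exact div_nonneg (by linarith [neg_abs_le a]) hS.le
    rw [show S + a = S * (1 + a / S) by field_simp, Complex.ofReal_mul,
      Complex.mul_cpow_ofReal_nonneg hS.le hpos]
    push_cast
    rfl
  rw [hfactor]
  refine ((hasSum_choose_mul_pow w hnorm).mul_left ((S : ℂ) ^ w)).congr_fun fun l => ?_
  rw [Complex.cpow_sub _ _ hSC, Complex.cpow_natCast, div_pow]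
  ring

end OneVariable

section Multichoose

lemma multichoose_succ {K : Type*} [Field K] [CharZero K] (z : K) (k : ℕ) :
    Ring.multichoose z (k + 1) = Ring.multichoose z k * ((z + k) / (k + 1)) := by
  have hfac (n : ℕ) : (n.factorial : K) * Ring.multichoose z n = (ascPochhammer K n).eval z := by
    rw [← nsmul_eq_mul, Ring.factorial_nsmul_multichoose_eq_ascPochhammer,
      Polynomial.ascPochhammer_smeval_eq_eval]
  have hk := hfac (k + 1)
  rw [ascPochhammer_succ_eval, ← hfac, Nat.factorial_succ] at hk
  push_cast at hk
  have : (k.factorial : K) ≠ 0 := Nat.cast_ne_zero.2 k.factorial_ne_zero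
  have : (k + 1 : K) ≠ 0 := Nat.cast_add_one_ne_zero k
  field_simp
  refine mul_left_cancel₀ ‹(k.factorial : K) ≠ 0› ?_
  linear_combination hk

lemma norm_multichoose_le {z : ℂ} {x : ℝ} (hzx : ‖z‖ ≤ x) (k : ℕ) :
    ‖Ring.multichoose z k‖ ≤ Ring.multichoose x k := by
  induction k with
  | zero => simp
  | succ k ih =>
    have hk : ‖(z + k) / (k + 1)‖ ≤ (x + k) / (k + 1) := by
      rw [norm_div, show (k + 1 : ℂ) = ((k + 1 : ℕ) : ℂ) by push_cast; rfl, Complex.norm_natCast]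
      push_cast
      gcongr
      simpa using (norm_add_le z k).trans (add_le_add_left hzx _)
    rw [multichoose_succ, multichoose_succ, norm_mul]
    gcongr
    exact (norm_nonneg _).trans ih

lemma multichoose_nonneg {x : ℝ} (hx : 0 ≤ x) (k : ℕ) : 0 ≤ Ring.multichoose x k :=
  (norm_nonneg _).trans (norm_multichoose_le (z := x) (by simp [abs_of_nonneg hx]) k)

lemma choose_neg_mul_pow {K : Type*} [Field K] [CharZero K] (z a : K) (k : ℕ) :
    Ring.choose (-z) k * a ^ k = Ring.multichoose z k * (-a) ^ k := by
  rw [Ring.choose_neg', neg_pow a, Units.smul_def, Int.coe_negOnePow_natCast]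
  simp only [zsmul_eq_mul]
  push_cast
  ring

end Multichoose

section Domain

variable {m : ℕ}

lemma measurableSet_domain (α : Fin (m + 1) → ℝ) : MeasurableSet (domain α) :=
  MeasurableSet.univ_pi fun _ => measurableSet_Ici

lemma sum_le_sum_of_mem_domain {α y : Fin (m + 1) → ℝ} (hy : y ∈ domain α)
    (u : Finset (Fin (m + 1))) : ∑ i ∈ u, α i ≤ ∑ i ∈ u, y i :=
  Finset.sum_le_sum fun i _ => hy i (Set.mem_univ i)

lemma volume_restrict_domain (α : Fin (m + 1) → ℝ) :
    volume.restrict (domain α) = Measure.pi fun i => volume.restrict (Set.Ici (α i)) :=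
  Measure.restrict_pi_pi _ _

lemma measurePreserving_funUnique_domain (α : Fin 1 → ℝ) :
    MeasurePreserving (MeasurableEquiv.funUnique (Fin 1) ℝ) (volume.restrict (domain α))
      (volume.restrict (Set.Ici (α 0))) := by
  rw [volume_restrict_domain]
  exact measurePreserving_piUnique _

lemma piFinSuccAbove_last_symm_swap :
    (MeasurableEquiv.piFinSuccAbove (fun _ => ℝ) (Fin.last (m + 1))).symm ∘ Prod.swap =
      fun p : (Fin (m + 1) → ℝ) × ℝ => (Fin.snoc p.1 p.2 : Fin (m + 2) → ℝ) := by
  funext p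
  simp [MeasurableEquiv.piFinSuccAbove, Fin.insertNthEquiv, Fin.insertNth_last']

lemma measurePreserving_snoc_domain (α : Fin (m + 2) → ℝ) :
    MeasurePreserving (fun p : (Fin (m + 1) → ℝ) × ℝ => (Fin.snoc p.1 p.2 : Fin (m + 2) → ℝ))
      ((volume.restrict (domain (Fin.init α))).prod
        (volume.restrict (Set.Ici (α (Fin.last (m + 1))))))
      (volume.restrict (domain α)) := by
  have hinit : volume.restrict (domain (Fin.init α)) =
      Measure.pi fun i : Fin (m + 1) => volume.restrict (Set.Ici (α i.castSucc)) :=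
    volume_restrict_domain _
  have h := (measurePreserving_piFinSuccAbove (fun i => volume.restrict (Set.Ici (α i)))
    (Fin.last (m + 1))).symm.comp Measure.measurePreserving_swap
  rw [piFinSuccAbove_last_symm_swap] at h
  simp only [Fin.succAbove_last] at h
  rwa [← hinit, ← volume_restrict_domain α] at h

variable {E : Type*} [NormedAddCommGroup E] {α : Fin (m + 2) → ℝ} {f : (Fin (m + 2) → ℝ) → E}

lemma measurableEmbedding_snoc : MeasurableEmbedding
    (fun p : (Fin (m + 1) → ℝ) × ℝ => (Fin.snoc p.1 p.2 : Fin (m + 2) → ℝ)) :=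
  piFinSuccAbove_last_symm_swap (m := m) ▸
    (MeasurableEquiv.measurableEmbedding _).comp MeasurableEquiv.prodComm.measurableEmbedding

lemma integrable_comp_snoc_iff :
    Integrable (fun p : (Fin (m + 1) → ℝ) × ℝ => f (Fin.snoc p.1 p.2))
      ((volume.restrict (domain (Fin.init α))).prod
        (volume.restrict (Set.Ici (α (Fin.last (m + 1)))))) ↔ IntegrableOn f (domain α) :=
  (measurePreserving_snoc_domain α).integrable_comp_emb measurableEmbedding_snoc

lemma integral_domain_eq_integral_snoc [NormedSpace ℝ E] (hf : IntegrableOn f (domain α)) :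
    ∫ y in domain α, f y = ∫ y in domain (Fin.init α),
      ∫ t in Set.Ici (α (Fin.last (m + 1))), f (Fin.snoc y t) := by
  rw [← (measurePreserving_snoc_domain α).integral_comp measurableEmbedding_snoc]
  exact integral_prod _ (integrable_comp_snoc_iff.2 hf)

lemma integrableOn_domain_of_integral_snoc_le {g : (Fin (m + 1) → ℝ) → ℝ}
    (hf : StronglyMeasurable f) (hg : IntegrableOn g (domain (Fin.init α)))
    (hint : ∀ y ∈ domain (Fin.init α),
      IntegrableOn (fun t => f (Fin.snoc y t)) (Set.Ici (α (Fin.last (m + 1)))))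
    (hle : ∀ y ∈ domain (Fin.init α),
      ∫ t in Set.Ici (α (Fin.last (m + 1))), ‖f (Fin.snoc y t)‖ ≤ g y) :
    IntegrableOn f (domain α) := by
  have hmem := ae_restrict_mem (μ := volume) (measurableSet_domain (Fin.init α))
  have hmeas := (hf.comp_measurable measurableEmbedding_snoc.measurable).aestronglyMeasurable
    (μ := (volume.restrict (domain (Fin.init α))).prod
      (volume.restrict (Set.Ici (α (Fin.last (m + 1))))))
  refine integrable_comp_snoc_iff.1 ((integrable_prod_iff hmeas).2 ⟨hmem.mono hint, ?_⟩)
  refine Integrable.mono' hg hmeas.norm.integral_prod_right' (hmem.mono fun y hy => ?_)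
  rw [Real.norm_of_nonneg (integral_nonneg fun t => norm_nonneg _)]
  exact hle y hy

end Domain

section Exponents

variable {m : ℕ}

lemma sum_Ici_castSucc {M : Type*} [AddCommMonoid M] {n : ℕ} (f : Fin (n + 1) → M) (i : Fin n) :
    ∑ j ∈ Finset.Ici i.castSucc, f j = ∑ j ∈ Finset.Ici i, f j.castSucc + f (Fin.last n) := by
  simp only [← Finset.filter_le_eq_Ici, Finset.sum_filter, Fin.sum_univ_castSucc,
    Fin.castSucc_le_castSucc_iff, Fin.le_last, if_true]

/-- The exponents that remain when the last variable is integrated out and the `l`-th term of the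
binomial series in `α_n` is selected: `s_{n-1}` becomes `s_{n-1} + s_n - 1 + l`. -/
def mergeLast (s : Fin (m + 2) → ℂ) (l : ℕ) : Fin (m + 1) → ℂ :=
  Fin.init s + Pi.single (Fin.last m) (s (Fin.last (m + 1)) - 1 + l)

lemma sum_Ici_mergeLast (s : Fin (m + 2) → ℂ) (l : ℕ) (j : Fin (m + 1)) :
    ∑ i ∈ Finset.Ici j, mergeLast s l i = ∑ i ∈ Finset.Ici j.castSucc, s i - 1 + l := by
  simp only [mergeLast, sum_Ici_castSucc, Pi.add_apply, Finset.sum_add_distrib,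
    Finset.sum_pi_single', Finset.mem_Ici, Fin.le_last, if_true, Fin.init]
  ring

lemma tailExp_snoc_castSucc (s : Fin (m + 2) → ℂ) (k : Fin m → ℕ) (l : ℕ) (j : Fin (m + 1)) :
    tailExp s (Fin.snoc k l) j.castSucc = tailExp (mergeLast s l) k j := by
  simp only [tailExp, sum_Ici_mergeLast, Finset.sum_filter, Fin.sum_univ_castSucc,
    Fin.snoc_castSucc, Fin.snoc_last, Fin.val_castSucc, Fin.val_last, j.is_le, if_true]
  push_cast
  ring

lemma tailExp_last (s : Fin (m + 2) → ℂ) (k : Fin (m + 1) → ℕ) :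
    tailExp s k (Fin.last (m + 1)) = s (Fin.last (m + 1)) - 1 := by
  have hempty : Finset.univ.filter (fun i : Fin (m + 1) => m + 1 ≤ (i : ℕ)) = ∅ :=
    Finset.filter_eq_empty_iff.2 fun i _ => i.isLt.not_ge
  rw [tailExp, Fin.val_last, hempty, ← Fin.top_eq_last, Finset.Ici_top]
  simp

lemma tailExp_mergeLast_zero (s : Fin (m + 2) → ℂ) (l : ℕ) (j : Fin (m + 1)) :
    tailExp (mergeLast s l) 0 j = tailExp s 0 j.castSucc + l := by
  simp only [tailExp, sum_Ici_mergeLast, Fin.val_castSucc, Pi.zero_apply, Nat.cast_zero,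
    Finset.sum_const_zero]
  push_cast
  ring

lemma re_tailExp_mergeLast_pos {s : Fin (m + 2) → ℂ} (hs : ∀ j, 0 < (tailExp s 0 j).re) (l : ℕ)
    (j : Fin (m + 1)) : 0 < (tailExp (mergeLast s l) 0 j).re := by
  rw [tailExp_mergeLast_zero, Complex.add_re, Complex.natCast_re]
  exact add_pos_of_pos_of_nonneg (hs _) l.cast_nonneg

lemma one_lt_re_last {s : Fin (m + 2) → ℂ} (hs : ∀ j, 0 < (tailExp s 0 j).re) :
    1 < (s (Fin.last (m + 1))).re := by
  simpa [tailExp_last] using hs (Fin.last (m + 1))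

/-- The factor of `term α s k` contributed by the last index `l = k_n`, as a function of `a = α_n`
and `z = s_n`. -/
def lastFactor (a : ℝ) (z : ℂ) (l : ℕ) : ℂ :=
  Ring.choose (-(z - 1)) l * (a : ℂ) ^ l / (z - 1)

lemma term_snoc (α : Fin (m + 2) → ℝ) (s : Fin (m + 2) → ℂ) (k : Fin m → ℕ) (l : ℕ) :
    term α s (Fin.snoc k l) = lastFactor (α (Fin.last (m + 1))) (s (Fin.last (m + 1))) l *
      term (Fin.init α) (mergeLast s l) k := by
  have h0 : tailExp s (Fin.snoc k l) 0 = tailExp (mergeLast s l) k 0 :=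
    tailExp_snoc_castSucc s k l 0
  simp only [term, lastFactor, h0, Fin.prod_univ_castSucc (n := m),
    Fin.prod_univ_castSucc (n := m + 1), Fin.succ_castSucc, Fin.succ_last, Fin.snoc_castSucc,
    Fin.snoc_last, tailExp_snoc_castSucc, tailExp_last, Fin.init, Fin.castSucc_zero,
    div_eq_mul_inv, mul_inv]
  ring

end Exponents

section Integrand

variable {m : ℕ}

lemma measurable_integrand (s : Fin (m + 1) → ℂ) : Measurable (integrand s) := by
  unfold integrand
  fun_prop

lemma integrand_snoc (s : Fin (m + 2) → ℂ) (y : Fin (m + 1) → ℝ) (t : ℝ) :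
    integrand s (Fin.snoc y t) =
      integrand (Fin.init s) y * ((∑ i, y i + t : ℝ) : ℂ) ^ (-(s (Fin.last (m + 1)))) := by
  simp only [integrand, Fin.prod_univ_castSucc (n := m + 1), Fin.sum_Iic_castSucc, Fin.init,
    ← Fin.top_eq_last, Finset.Iic_top]
  simp only [Fin.top_eq_last, Fin.sum_univ_castSucc (n := m + 1), Fin.snoc_castSucc,
    Fin.snoc_last]

lemma integrand_mergeLast (s : Fin (m + 2) → ℂ) (l : ℕ) {y : Fin (m + 1) → ℝ}
    (hy : 0 < ∑ i, y i) : integrand (mergeLast s l) y =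
      integrand (Fin.init s) y * ((∑ i, y i : ℝ) : ℂ) ^ (-(s (Fin.last (m + 1)) - 1) - l) := by
  have hne : ((∑ i, y i : ℝ) : ℂ) ≠ 0 := Complex.ofReal_ne_zero.2 hy.ne'
  have hsum : ∑ j ∈ Finset.Iic (Fin.last m), y j = ∑ j, y j := by
    rw [← Fin.top_eq_last, Finset.Iic_top]
  simp only [integrand, mergeLast, Pi.add_apply, Fin.prod_univ_castSucc (n := m), hsum,
    Pi.single_eq_same, Pi.single_eq_of_ne (Fin.castSucc_ne_last _), add_zero, mul_assoc,
    ← Complex.cpow_add _ _ hne]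
  ring_nf

lemma norm_integrand_mergeLast (s : Fin (m + 2) → ℂ) (l : ℕ) {y : Fin (m + 1) → ℝ}
    (hy : 0 < ∑ i, y i) : ‖integrand (mergeLast s l) y‖ = ‖integrand (Fin.init s) y‖ *
      (∑ i, y i) ^ (-((s (Fin.last (m + 1))).re - 1) - l) := by
  rw [integrand_mergeLast s l hy, norm_mul, Complex.norm_cpow_eq_rpow_re_of_pos hy]
  simp

lemma norm_integrand_mergeLast_le (s : Fin (m + 2) → ℂ) (l : ℕ) {y : Fin (m + 1) → ℝ} {A : ℝ}
    (hA : 0 < A) (hy : A ≤ ∑ i, y i) :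
    ‖integrand (mergeLast s l) y‖ ≤ ‖integrand (mergeLast s 0) y‖ / A ^ l := by
  have hy0 := hA.trans_le hy
  rw [norm_integrand_mergeLast s l hy0, norm_integrand_mergeLast s 0 hy0, Nat.cast_zero, sub_zero,
    Real.rpow_sub hy0, Real.rpow_natCast, mul_div_assoc]
  gcongr

variable {α : Fin (m + 2) → ℝ} {s : Fin (m + 2) → ℂ} {y : Fin (m + 1) → ℝ}

lemma integrableOn_integrand_snoc (hs : 1 < (s (Fin.last (m + 1))).re)
    (hy : 0 < ∑ i, y i + α (Fin.last (m + 1))) :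
    IntegrableOn (fun t => integrand s (Fin.snoc y t)) (Set.Ici (α (Fin.last (m + 1)))) := by
  simp only [integrand_snoc]
  exact (integrableOn_Ici_add_cpow hy hs).const_mul _

lemma integral_integrand_snoc (hs : 1 < (s (Fin.last (m + 1))).re)
    (hy : 0 < ∑ i, y i + α (Fin.last (m + 1))) :
    ∫ t in Set.Ici (α (Fin.last (m + 1))), integrand s (Fin.snoc y t) =
      integrand (Fin.init s) y * (((∑ i, y i + α (Fin.last (m + 1)) : ℝ) : ℂ) ^
        (-(s (Fin.last (m + 1)) - 1)) / (s (Fin.last (m + 1)) - 1)) := by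
  simp only [integrand_snoc, integral_const_mul, integral_Ici_add_cpow hy hs]

lemma integral_norm_integrand_snoc (hs : 1 < (s (Fin.last (m + 1))).re)
    (hy : 0 < ∑ i, y i + α (Fin.last (m + 1))) :
    ∫ t in Set.Ici (α (Fin.last (m + 1))), ‖integrand s (Fin.snoc y t)‖ =
      ‖integrand (Fin.init s) y‖ * ((∑ i, y i + α (Fin.last (m + 1))) ^
        (-((s (Fin.last (m + 1))).re - 1)) / ((s (Fin.last (m + 1))).re - 1)) := by
  simp only [integrand_snoc, norm_mul, integral_const_mul, integral_Ici_norm_add_cpow hy hs]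

lemma tailExp_fin_one (s : Fin 1 → ℂ) (k : Fin 0 → ℕ) (j : Fin 1) :
    tailExp s k j = s 0 - 1 := by
  have hIci : Finset.Ici (0 : Fin 1) = {0} := rfl
  simp [tailExp, Subsingleton.elim j 0, hIci]

lemma integrand_fin_one (s : Fin 1 → ℂ) (y : Fin 1 → ℝ) :
    integrand s y = ((0 + y 0 : ℝ) : ℂ) ^ (-(s 0)) := by
  have hIic : Finset.Iic (0 : Fin 1) = {0} := rfl
  simp [integrand, hIic]

lemma sum_Iic_init_pos (hα : ∀ i, 0 < ∑ j ∈ Finset.Iic i, α j) (i : Fin (m + 1)) :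
    0 < ∑ j ∈ Finset.Iic i, Fin.init α j :=
  Fin.sum_Iic_castSucc α i ▸ hα i.castSucc

lemma sum_pos_of_sum_Iic_pos {m : ℕ} {α : Fin (m + 1) → ℝ}
    (hα : ∀ i, 0 < ∑ j ∈ Finset.Iic i, α j) : 0 < ∑ i, α i := by
  simpa only [Finset.Iic_top] using hα ⊤

lemma sum_init_add_last_pos (hα : ∀ i, 0 < ∑ j ∈ Finset.Iic i, α j) :
    0 < ∑ i, Fin.init α i + α (Fin.last (m + 1)) :=
  Fin.sum_univ_castSucc α ▸ sum_pos_of_sum_Iic_pos hα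

theorem integrableOn_integrand {m : ℕ} {α : Fin (m + 1) → ℝ} {s : Fin (m + 1) → ℂ}
    (hα : ∀ i, 0 < ∑ j ∈ Finset.Iic i, α j) (hs : ∀ j, 0 < (tailExp s 0 j).re) :
    IntegrableOn (integrand s) (domain α) := by
  induction m with
  | zero =>
    have h0 : 1 < (s 0).re := by simpa [tailExp_fin_one] using hs 0
    have hα0 : 0 < 0 + α 0 := by simpa using sum_pos_of_sum_Iic_pos hα
    rw [funext (integrand_fin_one s)]
    exact ((measurePreserving_funUnique_domain α).integrable_comp_emb
      (MeasurableEquiv.measurableEmbedding _)).2 (integrableOn_Ici_add_cpow hα0 h0)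
  | succ m ih =>
    have hz := one_lt_re_last hs
    have hA : 0 < ∑ i, Fin.init α i := sum_pos_of_sum_Iic_pos (sum_Iic_init_pos hα)
    have hAa := sum_init_add_last_pos hα
    obtain ⟨C, hC⟩ := exists_rpow_neg_add_le hA hAa (sub_pos.2 hz).le
    have hmerge := (ih (sum_Iic_init_pos hα) (re_tailExp_mergeLast_pos hs 0)).norm
    have hsum {y} (hy : y ∈ domain (Fin.init α)) : ∑ i, Fin.init α i ≤ ∑ i, y i :=
      sum_le_sum_of_mem_domain hy Finset.univ
    have hpos {y} (hy : y ∈ domain (Fin.init α)) : 0 < ∑ i, y i + α (Fin.last (m + 1)) :=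
      hAa.trans_le (add_le_add_left (hsum hy) _)
    refine integrableOn_domain_of_integral_snoc_le (measurable_integrand s).stronglyMeasurable
      (hmerge.mul_const (C / ((s (Fin.last (m + 1))).re - 1)))
      (fun y hy => integrableOn_integrand_snoc hz (hpos hy)) fun y hy => ?_
    calc ∫ t in Set.Ici (α (Fin.last (m + 1))), ‖integrand s (Fin.snoc y t)‖
      _ = ‖integrand (Fin.init s) y‖ * ((∑ i, y i + α (Fin.last (m + 1))) ^
            (-((s (Fin.last (m + 1))).re - 1)) / ((s (Fin.last (m + 1))).re - 1)) :=
          integral_norm_integrand_snoc hz (hpos hy)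
      _ ≤ ‖integrand (Fin.init s) y‖ * (C * (∑ i, y i) ^
            (-((s (Fin.last (m + 1))).re - 1)) / ((s (Fin.last (m + 1))).re - 1)) := by
          gcongr
          exact hC _ (hsum hy)
      _ = ‖integrand (mergeLast s 0) y‖ * (C / ((s (Fin.last (m + 1))).re - 1)) := by
          rw [norm_integrand_mergeLast s 0 (hA.trans_le (hsum hy)), Nat.cast_zero, sub_zero]
          ring

end Integrand

section Series

variable {m : ℕ}

lemma summable_norm_lastFactor_div_pow {a A : ℝ} (haA : |a| < A) (z : ℂ) :
    Summable fun l => ‖lastFactor a z l‖ / A ^ l := by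
  have hA : 0 < A := (abs_nonneg a).trans_lt haA
  have hlt : ‖(a / A : ℂ)‖ < 1 := by simpa [abs_of_pos hA] using (div_lt_one hA).2 haA
  refine ((hasSum_choose_mul_pow (-(z - 1)) hlt).summable.norm.div_const ‖z - 1‖).congr
    fun l => ?_
  simp only [lastFactor, norm_div, norm_mul, norm_pow, Complex.norm_real,
    Real.norm_of_nonneg hA.le, div_pow]
  ring

variable {α : Fin (m + 2) → ℝ} {s : Fin (m + 2) → ℂ}

lemma hasSum_lastFactor_mul_integrand {a : ℝ} {y : Fin (m + 1) → ℝ} (hy : |a| < ∑ i, y i) :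
    HasSum (fun l => lastFactor a (s (Fin.last (m + 1))) l * integrand (mergeLast s l) y)
      (integrand (Fin.init s) y * (((∑ i, y i + a : ℝ) : ℂ) ^ (-(s (Fin.last (m + 1)) - 1)) /
        (s (Fin.last (m + 1)) - 1))) := by
  have hy0 : 0 < ∑ i, y i := (abs_nonneg a).trans_lt hy
  rw [mul_div_left_comm]
  refine ((hasSum_choose_mul_pow_mul_cpow hy (-(s (Fin.last (m + 1)) - 1))).mul_right
    (integrand (Fin.init s) y / (s (Fin.last (m + 1)) - 1))).congr_fun fun l => ?_
  rw [integrand_mergeLast s l hy0, lastFactor]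
  ring

theorem hasSum_Y_mergeLast (hα : ∀ i, 0 < ∑ j ∈ Finset.Iic i, α j)
    (hlast : |α (Fin.last (m + 1))| < ∑ i, Fin.init α i) (hs : ∀ j, 0 < (tailExp s 0 j).re) :
    HasSum (fun l => lastFactor (α (Fin.last (m + 1))) (s (Fin.last (m + 1))) l *
      Y (Fin.init α) (mergeLast s l)) (Y α s) := by
  have hA : 0 < ∑ i, Fin.init α i := (abs_nonneg _).trans_lt hlast
  have hsum {y} (hy : y ∈ domain (Fin.init α)) : ∑ i, Fin.init α i ≤ ∑ i, y i :=
    sum_le_sum_of_mem_domain hy Finset.univ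
  have hint (l : ℕ) : IntegrableOn (integrand (mergeLast s l)) (domain (Fin.init α)) :=
    integrableOn_integrand (sum_Iic_init_pos hα) (re_tailExp_mergeLast_pos hs l)
  have hY : Y α s = ∫ y in domain (Fin.init α), ∑' l,
      lastFactor (α (Fin.last (m + 1))) (s (Fin.last (m + 1))) l * integrand (mergeLast s l) y := by
    rw [Y, integral_domain_eq_integral_snoc (integrableOn_integrand hα hs)]
    refine setIntegral_congr_fun (measurableSet_domain _) fun y hy => ?_
    rw [(hasSum_lastFactor_mul_integrand (hlast.trans_le (hsum hy))).tsum_eq]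
    exact integral_integrand_snoc (one_lt_re_last hs)
      ((sum_init_add_last_pos hα).trans_le (add_le_add_left (hsum hy) _))
  have hbound (l : ℕ) : ∫ y in domain (Fin.init α), ‖integrand (mergeLast s l) y‖ ≤
      (∫ y in domain (Fin.init α), ‖integrand (mergeLast s 0) y‖) / (∑ i, Fin.init α i) ^ l := by
    rw [← integral_div]
    exact setIntegral_mono_on (hint l).norm ((hint 0).norm.div_const _) (measurableSet_domain _)
      fun y hy => norm_integrand_mergeLast_le s l hA (hsum hy)
  rw [hY]
  simp only [Y, ← integral_const_mul]
  refine hasSum_integral_of_summable_integral_norm (fun l => (hint l).const_mul _) ?_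
  refine Summable.of_nonneg_of_le (fun l => integral_nonneg fun y => norm_nonneg _) (fun l => ?_)
    ((summable_norm_lastFactor_div_pow hlast (s (Fin.last (m + 1)))).mul_right
      (∫ y in domain (Fin.init α), ‖integrand (mergeLast s 0) y‖))
  simp only [norm_mul, integral_const_mul]
  exact (mul_le_mul_of_nonneg_left (hbound l) (norm_nonneg _)).trans_eq (by ring)

lemma IteratedHasSum.mul_left {F : (Fin m → ℕ) → ℂ} {S : ℂ} (c : ℂ) (h : IteratedHasSum m F S) :
    IteratedHasSum m (fun k => c * F k) (c * S) := by
  induction m generalizing S with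
  | zero => exact congrArg (c * ·) h
  | succ m ih =>
    obtain ⟨g, hg, hS⟩ := h
    exact ⟨fun l => c * g l, fun l => ih (hg l), hS.mul_left c⟩

lemma sum_Iic_pos {α : Fin (m + 1) → ℝ} (hα₀ : 0 < α 0)
    (hα : ∀ i, i ≠ 0 → |α i| < ∑ j ∈ Finset.Iio i, α j) (i : Fin (m + 1)) :
    0 < ∑ j ∈ Finset.Iic i, α j := by
  rcases eq_or_ne i 0 with rfl | hi
  · simpa [← bot_eq_zero] using hα₀
  · rw [← Finset.Iio_insert, Finset.sum_insert Finset.notMem_Iio_self]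
    linarith [hα i hi, neg_abs_le (α i)]

lemma term_eq_Y_fin_one {α : Fin 1 → ℝ} {s : Fin 1 → ℂ} (hα : 0 < α 0) (hs : 1 < (s 0).re)
    (k : Fin 0 → ℕ) : term α s k = Y α s := by
  have hα0 : 0 < 0 + α 0 := by rwa [zero_add]
  calc term α s k = ((0 + α 0 : ℝ) : ℂ) ^ (-(s 0 - 1)) / (s 0 - 1) := by
        simp [term, tailExp_fin_one]
    _ = ∫ t in Set.Ici (α 0), ((0 + t : ℝ) : ℂ) ^ (-(s 0)) := (integral_Ici_add_cpow hα0 hs).symm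
    _ = Y α s := by
        rw [Y, funext (integrand_fin_one s)]
        exact ((measurePreserving_funUnique_domain α).integral_comp
          (MeasurableEquiv.measurableEmbedding _) _).symm

theorem iteratedHasSum_term {m : ℕ} {α : Fin (m + 1) → ℝ} {s : Fin (m + 1) → ℂ} (hα₀ : 0 < α 0)
    (hα : ∀ i, i ≠ 0 → |α i| < ∑ j ∈ Finset.Iio i, α j) (hs : ∀ j, 0 < (tailExp s 0 j).re) :
    IteratedHasSum m (term α s) (Y α s) := by
  induction m with
  | zero => exact term_eq_Y_fin_one hα₀ (by simpa [tailExp_fin_one] using hs 0) _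
  | succ m ih =>
    have hinit (i : Fin (m + 1)) (hi : i ≠ 0) :
        |Fin.init α i| < ∑ j ∈ Finset.Iio i, Fin.init α j :=
      Fin.sum_Iio_castSucc α i ▸ hα i.castSucc (Fin.castSucc_ne_zero_iff.2 hi)
    have hlast : |α (Fin.last (m + 1))| < ∑ i, Fin.init α i := by
      simpa [Fin.Iio_last_eq_map, Fin.init] using hα (Fin.last (m + 1)) Fin.last_pos.ne'
    refine ⟨_, fun l => ?_, hasSum_Y_mergeLast (sum_Iic_pos hα₀ hα) hlast hs⟩
    simp only [term_snoc]
    exact (ih hα₀ hinit (re_tailExp_mergeLast_pos hs l)).mul_left _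

end Series
section Summability

variable {m : ℕ}

lemma IteratedHasSum.hasSum {F : (Fin m → ℕ) → ℂ} {S : ℂ} (h : IteratedHasSum m F S)
    (hF : Summable F) : HasSum F S := by
  induction m generalizing S with
  | zero =>
    rw [← show F Fin.elim0 = S from h]
    convert! hasSum_unique F
  | succ m ih =>
    obtain ⟨g, hg, hS⟩ := h
    have hF' := (Fin.snocEquiv fun _ : Fin (m + 1) => ℕ).summable_iff.2 hF
    have hfib := hF'.hasSum.prod_fiberwise fun l => ih (hg l) (hF'.prod_factor l)
    rw [hS.unique hfib, ← (Fin.snocEquiv fun _ : Fin (m + 1) => ℕ).hasSum_iff]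
    exact hF'.hasSum

lemma IteratedHasSum.summable_of_nonneg {f : (Fin m → ℕ) → ℝ} {S : ℂ}
    (h : IteratedHasSum m (fun k => (f k : ℂ)) S) (hf : ∀ k, 0 ≤ f k) : Summable f := by
  induction m generalizing S with
  | zero => exact (hasSum_unique f).summable
  | succ m ih =>
    obtain ⟨g, hg, hS⟩ := h
    have hfib (l : ℕ) : Summable fun k : Fin m → ℕ => f (Fin.snoc k l) := ih (hg l) fun k => hf _
    have htsum (l : ℕ) : ∑' k : Fin m → ℕ, f (Fin.snoc k l) = (g l).re :=
      (Complex.hasSum_re ((hg l).hasSum (Complex.summable_ofReal.2 (hfib l)))).tsum_eq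
    rw [← (Fin.snocEquiv fun _ : Fin (m + 1) => ℕ).summable_iff]
    refine (summable_prod_of_nonneg fun p => hf _).2 ⟨hfib, ?_⟩
    exact (Complex.hasSum_re hS).summable.congr fun l => (htsum l).symm

/-- The sum `k_{j+1} + ⋯ + k_n` by which the indices `k` shift `tailExp s k j`, with the indexing
of `tailExp`. -/
def tailDegree (k : Fin m → ℕ) (j : Fin (m + 1)) : ℕ :=
  ∑ i ∈ Finset.univ.filter (fun i : Fin m => (j : ℕ) ≤ (i : ℕ)), k i

lemma tailExp_eq_add_tailDegree (s : Fin (m + 1) → ℂ) (k : Fin m → ℕ) (j : Fin (m + 1)) :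
    tailExp s k j = tailExp s 0 j + tailDegree k j := by
  simp [tailExp, tailDegree]

/-- The exponents `(1, …, 1, 1 + x)`, whose tail exponents `tailExp` at `k = 0` all equal `x`. -/
def flatExponents (m : ℕ) (x : ℝ) : Fin (m + 1) → ℂ :=
  1 + Pi.single (Fin.last m) (x : ℂ)

lemma tailExp_flatExponents (x : ℝ) (k : Fin m → ℕ) (j : Fin (m + 1)) :
    tailExp (flatExponents m x) k j = ((x + tailDegree k j : ℝ) : ℂ) := by
  have hcard : ((m + 1 - j : ℕ) : ℂ) = m + 1 - (j : ℕ) := by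
    rw [Nat.cast_sub j.isLt.le]
    push_cast
    rfl
  rw [tailExp_eq_add_tailDegree]
  simp [tailExp, flatExponents, Finset.sum_add_distrib, Fin.le_last, hcard]

/-- The parameters `(α_1, -|α_2|, …, -|α_n|)`, which make every term of the series
nonnegative when the tail exponents are positive reals. -/
def negTail (α : Fin (m + 1) → ℝ) : Fin (m + 1) → ℝ :=
  Fin.cons (α 0) fun j => -|α j.succ|

lemma abs_negTail_lt_sum_Iio {α : Fin (m + 1) → ℝ} (hα : ∑ j : Fin m, |α j.succ| < α 0)
    (i : Fin (m + 1)) (hi : i ≠ 0) : |negTail α i| < ∑ j ∈ Finset.Iio i, negTail α j := by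
  obtain ⟨i, rfl⟩ := Fin.exists_succ_eq.2 hi
  have hsum : ∑ j ∈ Finset.Iio i.succ, negTail α j =
      α 0 - ∑ j ∈ Finset.Iio i, |α j.succ| := by
    simp only [← Finset.filter_gt_eq_Iio, Finset.sum_filter, Fin.sum_univ_succ, negTail]
    simp [← Finset.sum_filter, sub_eq_add_neg]
  have hle : |α i.succ| + ∑ j ∈ Finset.Iio i, |α j.succ| ≤ ∑ j : Fin m, |α j.succ| := by
    rw [← Finset.sum_insert Finset.notMem_Iio_self (f := fun j : Fin m => |α j.succ|)]
    exact Finset.sum_le_univ_sum_of_nonneg fun j => abs_nonneg _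
  rw [hsum, negTail, Fin.cons_succ, abs_neg, abs_abs]
  linarith

/-- The term of the series for the parameters `negTail α` and the exponents `flatExponents m x`,
as a real number. -/
def majorant (α : Fin (m + 1) → ℝ) (x : ℝ) (k : Fin m → ℕ) : ℝ :=
  (∏ j : Fin m, Ring.multichoose (x + tailDegree k j.succ) (k j))
    * α 0 ^ (-(x + tailDegree k 0))
    * (∏ j : Fin m, |α j.succ| ^ k j)
    / ∏ j : Fin (m + 1), (x + tailDegree k j)

lemma term_negTail_flatExponents {α : Fin (m + 1) → ℝ} (hα₀ : 0 < α 0) (x : ℝ) (k : Fin m → ℕ) :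
    term (negTail α) (flatExponents m x) k = (majorant α x k : ℂ) := by
  have hfactor (j : Fin m) :
      Ring.choose (-((x + tailDegree k j.succ : ℝ) : ℂ)) (k j) * (negTail α j.succ : ℂ) ^ k j =
        ((Ring.multichoose (x + tailDegree k j.succ) (k j) * |α j.succ| ^ k j : ℝ) : ℂ) := by
    rw [choose_neg_mul_pow, ← Complex.ofRealHom_eq_coe, ← Complex.ofRealHom_eq_coe,
      ← Ring.map_multichoose]
    simp [negTail]
  have hpow : (α 0 : ℂ) ^ (-((x + tailDegree k 0 : ℝ) : ℂ)) =
      ((α 0 ^ (-(x + tailDegree k 0)) : ℝ) : ℂ) := by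
    rw [Complex.ofReal_cpow hα₀.le, Complex.ofReal_neg]
  have hα0 : negTail α 0 = α 0 := rfl
  simp only [term, tailExp_flatExponents, majorant]
  rw [mul_right_comm, ← Finset.prod_mul_distrib, Finset.prod_congr rfl fun j _ => hfactor j, hα0,
    hpow, mul_right_comm (Finset.prod _ _), ← Finset.prod_mul_distrib]
  push_cast
  rfl

lemma majorant_nonneg {α : Fin (m + 1) → ℝ} (hα₀ : 0 ≤ α 0) {x : ℝ} (hx : 0 < x)
    (k : Fin m → ℕ) : 0 ≤ majorant α x k := by
  have hmul (j : Fin m) : 0 ≤ Ring.multichoose (x + tailDegree k j.succ) (k j) :=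
    multichoose_nonneg (by positivity) _
  have hprod := Finset.prod_nonneg fun j (_ : j ∈ Finset.univ) => hmul j
  unfold majorant
  positivity

lemma summable_majorant {α : Fin (m + 1) → ℝ} (hα₀ : 0 < α 0) (hα : ∑ j : Fin m, |α j.succ| < α 0)
    {x : ℝ} (hx : 0 < x) : Summable (majorant α x) := by
  have hexp (j : Fin (m + 1)) : 0 < (tailExp (flatExponents m x) 0 j).re := by
    rw [tailExp_flatExponents, Complex.ofReal_re]
    positivity
  have h := iteratedHasSum_term (α := negTail α) hα₀ (abs_negTail_lt_sum_Iio hα) hexp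
  rw [funext (term_negTail_flatExponents hα₀ x)] at h
  exact h.summable_of_nonneg (majorant_nonneg hα₀.le hx)

variable {α : Fin (m + 1) → ℝ} {s : Fin (m + 1) → ℂ} {x : ℝ}

lemma norm_choose_neg_tailExp_le (hx : ∀ j, ‖tailExp s 0 j‖ ≤ x) (k : Fin m → ℕ) (j : Fin (m + 1))
    (l : ℕ) : ‖Ring.choose (-tailExp s k j) l‖ ≤ Ring.multichoose (x + tailDegree k j) l := by
  have hnorm : ‖tailExp s k j‖ ≤ x + tailDegree k j := by
    rw [tailExp_eq_add_tailDegree]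
    exact (norm_add_le _ _).trans (by simpa using hx j)
  have h := congrArg norm (choose_neg_mul_pow (tailExp s k j) 1 l)
  simp only [one_pow, mul_one, norm_mul, norm_pow, norm_neg, norm_one] at h
  exact h.trans_le (norm_multichoose_le hnorm l)

lemma inv_norm_tailExp_le (hs : ∀ j, 0 < (tailExp s 0 j).re) (hx : ∀ j, ‖tailExp s 0 j‖ ≤ x)
    (k : Fin m → ℕ) (j : Fin (m + 1)) :
    ‖tailExp s k j‖⁻¹ ≤ x / (tailExp s 0 j).re * (x + tailDegree k j)⁻¹ := by
  have hre := hs j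
  have hle : (tailExp s 0 j).re ≤ x := (Complex.re_le_norm _).trans (hx j)
  have hnorm : (tailExp s 0 j).re + tailDegree k j ≤ ‖tailExp s k j‖ := by
    refine le_of_eq_of_le ?_ (Complex.re_le_norm _)
    rw [tailExp_eq_add_tailDegree s k, Complex.add_re, Complex.natCast_re]
  have hx0 : 0 < x := hre.trans_le hle
  calc ‖tailExp s k j‖⁻¹ ≤ ((tailExp s 0 j).re + tailDegree k j)⁻¹ := by gcongr
    _ ≤ x / (tailExp s 0 j).re * (x + tailDegree k j)⁻¹ := by
      rw [← div_eq_mul_inv, div_div, inv_eq_one_div,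
        div_le_div_iff₀ (by positivity) (by positivity)]
      nlinarith [mul_le_mul_of_nonneg_right hle (Nat.cast_nonneg (α := ℝ) (tailDegree k j))]

lemma norm_term_le (hα₀ : 0 < α 0) (hs : ∀ j, 0 < (tailExp s 0 j).re)
    (hx : ∀ j, ‖tailExp s 0 j‖ ≤ x) (k : Fin m → ℕ) :
    ‖term α s k‖ ≤
      α 0 ^ (x - (tailExp s 0 0).re) * (∏ j, x / (tailExp s 0 j).re) * majorant α x k := by
  have hpow : ‖(α 0 : ℂ) ^ (-tailExp s k 0)‖ =
      α 0 ^ (x - (tailExp s 0 0).re) * α 0 ^ (-(x + tailDegree k 0)) := by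
    rw [Complex.norm_cpow_eq_rpow_re_of_pos hα₀, ← Real.rpow_add hα₀, tailExp_eq_add_tailDegree s k,
      Complex.neg_re, Complex.add_re, Complex.natCast_re]
    ring_nf
  have hx₀ : 0 ≤ x := (norm_nonneg _).trans (hx 0)
  have hchoose : 0 ≤ ∏ j : Fin m, Ring.multichoose (x + tailDegree k j.succ) (k j) :=
    Finset.prod_nonneg fun j _ => multichoose_nonneg (by positivity) _
  calc ‖term α s k‖
    _ = (∏ j, ‖Ring.choose (-tailExp s k j.succ) (k j)‖) * ‖(α 0 : ℂ) ^ (-tailExp s k 0)‖ *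
          (∏ j, |α j.succ| ^ k j) * ∏ j, ‖tailExp s k j‖⁻¹ := by
        simp [term, norm_prod, div_eq_mul_inv]
    _ ≤ (∏ j, Ring.multichoose (x + tailDegree k j.succ) (k j)) *
          (α 0 ^ (x - (tailExp s 0 0).re) * α 0 ^ (-(x + tailDegree k 0))) *
          (∏ j, |α j.succ| ^ k j) *
          ∏ j, x / (tailExp s 0 j).re * (x + tailDegree k j)⁻¹ := by
        rw [hpow]
        gcongr
        · exact norm_choose_neg_tailExp_le hx k _ _
        · exact inv_norm_tailExp_le hs hx k _
    _ = α 0 ^ (x - (tailExp s 0 0).re) * (∏ j, x / (tailExp s 0 j).re) * majorant α x k := by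
        rw [majorant, Finset.prod_mul_distrib, Finset.prod_inv_distrib]
        ring

theorem summable_term (hα : ∑ j : Fin m, |α j.succ| < α 0) (hs : ∀ j, 0 < (tailExp s 0 j).re) :
    Summable (term α s) := by
  have hα₀ : 0 < α 0 := (Finset.sum_nonneg fun _ _ => abs_nonneg _).trans_lt hα
  have hx (j : Fin (m + 1)) : ‖tailExp s 0 j‖ ≤ ∑ j, ‖tailExp s 0 j‖ :=
    Finset.single_le_sum (fun i _ => norm_nonneg (tailExp s 0 i)) (Finset.mem_univ j)
  have hx₀ : 0 < ∑ j, ‖tailExp s 0 j‖ :=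
    ((hs 0).trans_le (Complex.re_le_norm _)).trans_le (hx 0)
  exact .of_norm_bounded ((summable_majorant hα₀ hα hx₀).mul_left _) (norm_term_le hα₀ hs hx)

end Summability

end HurwitzIntegral

end

open MeasureTheory HurwitzIntegral in
theorem integral_function_series_expansion_general
    {m : ℕ} {α : Fin (m + 1) → ℝ} {s : Fin (m + 1) → ℂ} (hα₀ : 0 < α 0)
    (hα : ∀ i : Fin (m + 1), i ≠ 0 → |α i| < ∑ j ∈ Finset.Iio i, α j)
    (hs : ∀ j : Fin (m + 1), (m : ℝ) + 1 - ((j : ℕ) : ℝ) < (∑ i ∈ Finset.Ici j, s i).re) :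
    IntegrableOn (integrand s) (domain α) ∧ IteratedHasSum m (term α s) (Y α s) ∧
      (∑ j : Fin m, |α j.succ| < α 0 → HasSum (term α s) (Y α s)) := by
  have htail (j : Fin (m + 1)) : 0 < (tailExp s 0 j).re := by
    simpa [tailExp] using sub_pos.2 (hs j)
  have hiter := iteratedHasSum_term hα₀ hα htail
  exact ⟨integrableOn_integrand (sum_Iic_pos hα₀ hα) htail, hiter,
    fun hsum => hiter.hasSum (summable_term hsum htail)⟩

/-- Here `n = m + 1 ≥ 2`. The integral converges absolutely, equals the iterated series
`∑_{k_n} ⋯ ∑_{k_2}`, and equals the unordered (absolutely convergent) multiple series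
whenever `α_2 + ⋯ + α_n < α_1`. -/
theorem integral_function_series_expansion
    (m : ℕ) (hm : 1 ≤ m) (α : Fin (m + 1) → ℝ) (hα : ∀ i, 0 < α i)
    (hα' : ∀ i : Fin (m + 1), i ≠ 0 → α i < ∑ j ∈ Finset.Iio i, α j)
    (s : Fin (m + 1) → ℂ)
    (hs : ∀ j : Fin (m + 1), (m : ℝ) + 1 - ((j : ℕ) : ℝ) < (∑ i ∈ Finset.Ici j, s i).re) :
    MeasureTheory.IntegrableOn (HurwitzIntegral.integrand s) (HurwitzIntegral.domain α) ∧
      HurwitzIntegral.IteratedHasSum m (HurwitzIntegral.term α s) (HurwitzIntegral.Y α s) ∧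
      ((∑ j : Fin m, α j.succ) < α 0 →
        HasSum (HurwitzIntegral.term α s) (HurwitzIntegral.Y α s)) := by
  simpa only [abs_of_pos (hα _)] using integral_function_series_expansion_general (hα 0)
    (fun i hi => (abs_of_pos (hα i)).trans_lt (hα' i hi)) hs
end

section
/- Let $n\ge 2$, let $\alpha=(\alpha_1,\dots,\alpha_n)$ be real numbers with $\alpha_i>0$ and $a=(a_1,\dots,a_n)$ real numbers with $a_i\ge 0$ for all $i$, assume $\alpha_i+a_i<\sum_{j=1}^{i-1}(\alpha_j+a_j)$ for every $2\le i\le n$, and let $s=(s_1,\dots,s_n)\in\mathbb{C}^n$ satisfy $\operatorname{Re}(s_j+\cdots+s_n)>n-j+1$ for every $1\le j\le n$. Then the integral $$Y_{n,a}(\alpha;s)=\int_{[\alpha_1,\infty)\times\cdots\times[\alpha_n,\infty)}\ \prod_{i=1}^n\bigl(x_1+\cdots+x_i+a_1+\cdots+a_i\bigr)^{-s_i}\,dx$$ converges absolutely. For $k=(k_2,\dots,k_n)\in\mathbb{N}^{n-1}$ (where $\mathbb{N}=\{0,1,2,\dots\}$) and $1\le j\le n$ put $$E_j(k)=-\sum_{i=j}^n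 s_i+(n-j+1)-\sum_{i=j+1}^n k_i,\qquad F(k)=\frac{(\alpha_1+a_1)^{E_1(k)}}{E_1(k)}\prod_{j=2}^n\binom{E_j(k)}{k_j}\frac{(\alpha_j+a_j)^{k_j}}{E_j(k)},$$ where $\binom{z}{k}=z(z-1)\cdots(z-k+1)/k!$ and empty sums are $0$. Then $$Y_{n,a}(\alpha;s)=(-1)^n\sum_{k_n\in\mathbb{N}}\Bigl(\sum_{k_{n-1}\in\mathbb{N}}\Bigl(\cdots\Bigl(\sum_{k_2\in\mathbb{N}}F(k_2,\dots,k_n)\Bigr)\cdots\Bigr)\Bigr),$$ where the multiple series over $k\in\mathbb{N}^{n-1}$ is summed iteratively, with $k_2$ innermost and $k_n$ outermost, and each of the successive one-variable series converges absolutely. If moreover $\sum_{j=2}^n(\alpha_j+a_j)<\alpha_1+a_1$, then the multiple series $\sum_{k\in\mathbb{N}^{n-1}}F(k)$ converges absolutely as well, and $Y_{n,a}(\alpha;s)=(-1)^n\sum_{k\in\mathbb{N}^{n-1}}F(k)$. -/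
open MeasureTheory

noncomputable section

/-- The integrand `∏_i (x_1+⋯+x_i + a_1+⋯+a_i)^{-s_i}`. -/
def shiftedIntegrand {n : ℕ} (a : Fin n → ℝ) (s : Fin n → ℂ) (x : Fin n → ℝ) : ℂ :=
  ∏ i : Fin n, (((∑ j ∈ Finset.Iic i, x j) + ∑ j ∈ Finset.Iic i, a j : ℝ) : ℂ) ^ (-(s i))

/-- The domain `[α_1,∞) × ⋯ × [α_n,∞)`. -/
def shiftedDomain {n : ℕ} (α : Fin n → ℝ) : Set (Fin n → ℝ) :=
  Set.univ.pi fun i => Set.Ici (α i)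

/-- The shifted integral function `Y_{n,a}(α; s)`. -/
def shiftedY {n : ℕ} (a α : Fin n → ℝ) (s : Fin n → ℂ) : ℂ :=
  ∫ x in shiftedDomain α, shiftedIntegrand a s x

/-- With `n = m + 1`, `p` standing for the 1-based index `j = p + 1`, and the entry `k i`
(`i : Fin m`) standing for `k_{i+2}`, this is
`-(s_j + ⋯ + s_n) + (n - j + 1) - (k_{j+1} + ⋯ + k_n)`. -/
def shiftedExponent {m : ℕ} (s : Fin (m + 1) → ℂ) (k : Fin m → ℕ) (p : Fin (m + 1)) : ℂ :=
  -(∑ i ∈ Finset.Ici p, s i) + ((m : ℂ) + 1 - (p : ℕ))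
    - ∑ i ∈ Finset.univ.filter (fun i : Fin m => (p : ℕ) ≤ (i : ℕ)), (k i : ℂ)

/-- The term of the series with index `k = (k_2,…,k_n)`, `n = m + 1`; the factor of the product
with `j : Fin m` is the one with the 1-based index `j + 2`.  `Ring.choose z k` is
`z (z-1) ⋯ (z-k+1) / k!`. -/
def shiftedTerm {m : ℕ} (a α : Fin (m + 1) → ℝ) (s : Fin (m + 1) → ℂ) (k : Fin m → ℕ) : ℂ :=
  ((α 0 + a 0 : ℝ) : ℂ) ^ shiftedExponent s k 0 / shiftedExponent s k 0
    * ∏ j : Fin m,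
        Ring.choose (shiftedExponent s k j.succ) (k j)
          * ((α j.succ + a j.succ : ℝ) : ℂ) ^ (k j) / shiftedExponent s k j.succ

/-- `IteratedHasSum m F S`: the iterated series
`∑_{k_last} ( ⋯ ( ∑_{k_first} F (k_first, …, k_last) ) ⋯ )`, with the last index outermost and
the first index innermost, has the sum `S`; every one of the one-variable series in it converges
absolutely (`HasSum` over `ℕ` in `ℂ`). -/
def IteratedHasSum : (m : ℕ) → ((Fin m → ℕ) → ℂ) → ℂ → Prop
  | 0, F, S => F Fin.elim0 = S
  | m + 1, F, S => ∃ g : ℕ → ℂ,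
      (∀ l : ℕ, IteratedHasSum m (fun k => F (Fin.snoc (α := fun _ => ℕ) k l)) (g l)) ∧ HasSum g S

end

/-!
Write `c_i = α_i + a_i`. Integrating out `x_n` leaves `-(X + c_n)^(1 - s_n) / (1 - s_n)`, where
`X = x_1 + ⋯ + x_{n-1} + a_1 + ⋯ + a_{n-1}` satisfies `X ≥ c_1 + ⋯ + c_{n-1} > |c_n|` on the
domain. Hence the binomial series in `c_n / X` may be integrated term by term, and its `k_n`-th
term produces an integral of the same kind in `n - 1` variables; iterate.

For absolute convergence of the multiple series, replace each `c_j`, `j ≥ 2`, by `-|c_j|` and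
choose `s` such that every `E_j(0)` equals `-N` with `N` large. All terms then have the same sign,
so the iterated convergence already proved for this series, which allows negative `c_j`, is
absolute convergence; and termwise this series dominates the given one up to a constant.
-/

theorem choose_eq_prod_range_div {K : Type*} [Field K] [CharZero K] (z : K) (k : ℕ) :
    Ring.choose z k = (∏ i ∈ Finset.range k, (z - i)) / k.factorial := by
  rw [Ring.choose_eq_smul, ← Polynomial.aeval_eq_smeval, Polynomial.aeval_def,
    ← Polynomial.eval_map, descPochhammer_map, descPochhammer_eval_eq_prod_range, smul_eq_mul,
    inv_mul_eq_div]

theorem norm_choose_le_norm_choose_neg {z : ℂ} {x : ℝ} (hz : ‖z‖ ≤ x) (k : ℕ) :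
    ‖Ring.choose z k‖ ≤ ‖Ring.choose (-x : ℂ) k‖ := by
  have hx : 0 ≤ x := (norm_nonneg z).trans hz
  simp only [choose_eq_prod_range_div, norm_div, norm_prod]
  gcongr with i
  calc ‖z - i‖ ≤ ‖z‖ + ‖(i : ℂ)‖ := norm_sub_le _ _
    _ ≤ x + i := by rw [Complex.norm_natCast]; gcongr
    _ = ‖(-x - i : ℂ)‖ := by
      rw [← neg_add', norm_neg]
      exact_mod_cast (Complex.norm_of_nonneg (r := x + i) (by positivity)).symm

theorem choose_neg_mul_neg_one_pow {x : ℝ} (hx : 0 ≤ x) (k : ℕ) :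
    Ring.choose (-x : ℂ) k * (-1) ^ k = ‖Ring.choose (-x : ℂ) k‖ := by
  have hprod : ∏ i ∈ Finset.range k, (-x - i : ℂ) =
      (-1) ^ k * ((∏ i ∈ Finset.range k, (x + i) : ℝ) : ℂ) := by
    simp [← neg_add', Finset.prod_neg, -neg_add_rev]
  have hnonneg : 0 ≤ ∏ i ∈ Finset.range k, (x + i) :=
    Finset.prod_nonneg fun i _ => by positivity
  rw [choose_eq_prod_range_div, hprod, norm_div, norm_mul, norm_pow, norm_neg, norm_one, one_pow,
    one_mul, Complex.norm_of_nonneg hnonneg, Complex.norm_natCast, div_mul_eq_mul_div,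
    mul_right_comm, ← mul_pow, neg_one_mul, neg_neg, one_pow, one_mul]
  push_cast
  rfl

theorem summable_norm_choose_mul_pow (z : ℂ) {r : ℝ} (hr0 : 0 ≤ r) (hr : r < 1) :
    Summable fun k : ℕ => ‖Ring.choose z k‖ * r ^ k := by
  lift r to NNReal using hr0
  have hradius : (r : ENNReal) < (binomialSeries ℂ z).radius :=
    lt_of_lt_of_le (by exact_mod_cast hr) binomialSeries_radius_ge_one
  simpa [binomialSeries, FormalMultilinearSeries.ofScalars_norm] using
    (binomialSeries ℂ z).summable_norm_mul_pow hradius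

theorem hasSum_choose_mul_pow (z : ℂ) {x : ℂ} (hx : ‖x‖ < 1) :
    HasSum (fun k : ℕ => Ring.choose z k * x ^ k) ((1 + x) ^ z) := by
  have hmem : x ∈ Metric.eball (0 : ℂ) 1 := by
    rwa [← ENNReal.ofReal_one, Metric.eball_ofReal, mem_ball_zero_iff]
  simpa only [binomialSeries_apply, List.ofFn_const, List.prod_replicate, smul_eq_mul, zero_add]
    using (Complex.one_add_cpow_hasFPowerSeriesOnBall_zero (a := z)).hasSum hmem

/-- The factor `C(E, k) c ^ k / E` which a single index `k` of the multiple series contributes to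
`shiftedTerm`. -/
noncomputable def seriesFactor (E : ℂ) (c : ℝ) (k : ℕ) : ℂ :=
  Ring.choose E k * (c : ℂ) ^ k / E

theorem hasSum_seriesFactor_mul_cpow (E : ℂ) {c X : ℝ} (hcX : |c| < X) :
    HasSum (fun k : ℕ => seriesFactor E c k * (X : ℂ) ^ (E - k)) (((X + c : ℝ) : ℂ) ^ E / E) := by
  have hX : 0 < X := (abs_nonneg c).trans_lt hcX
  have hX' : (X : ℂ) ≠ 0 := by exact_mod_cast hX.ne'
  have hratio : |c / X| < 1 := by rwa [abs_div, abs_of_pos hX, div_lt_one hX]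
  have hbinom := hasSum_choose_mul_pow E (x := ((c / X : ℝ) : ℂ))
    (by rwa [Complex.norm_real, Real.norm_eq_abs])
  have hfactor : ((X + c : ℝ) : ℂ) ^ E = (X : ℂ) ^ E * (1 + ((c / X : ℝ) : ℂ)) ^ E := by
    have hpos : 0 ≤ 1 + c / X := by linarith [(abs_lt.1 hratio).1]
    rw [← Complex.ofReal_one, ← Complex.ofReal_add, ← Complex.mul_cpow_ofReal_nonneg hX.le hpos,
      ← Complex.ofReal_mul, mul_add, mul_one, mul_div_cancel₀ _ hX.ne']
  rw [hfactor]
  refine ((hbinom.mul_left ((X : ℂ) ^ E)).div_const E).congr_fun fun k => ?_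
  rw [seriesFactor, Complex.cpow_sub _ _ hX', Complex.cpow_natCast, Complex.ofReal_div, div_pow]
  ring

theorem summable_norm_seriesFactor_div_pow (E : ℂ) {c B : ℝ} (hcB : |c| < B) :
    Summable fun k : ℕ => ‖seriesFactor E c k‖ / B ^ k := by
  have hB : 0 < B := (abs_nonneg c).trans_lt hcB
  have hsum := (summable_norm_choose_mul_pow E (r := |c| / B) (by positivity)
    ((div_lt_one hB).2 hcB)).div_const ‖E‖
  refine hsum.congr fun k => ?_
  rw [seriesFactor, norm_div, norm_mul, norm_pow, Complex.norm_real, Real.norm_eq_abs, div_pow]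
  ring

theorem seriesFactor_neg_eq_neg_norm {x c : ℝ} (hx : 0 ≤ x) (hc : 0 ≤ c) (k : ℕ) :
    seriesFactor (-x) (-c) k = -‖seriesFactor (-x) (-c) k‖ := by
  have hnorm : ‖seriesFactor (-x) (-c) k‖ = ‖Ring.choose (-x : ℂ) k‖ * c ^ k / x := by
    simp [seriesFactor, abs_of_nonneg hx, abs_of_nonneg hc]
  rw [hnorm, seriesFactor]
  push_cast
  rw [← choose_neg_mul_neg_one_pow hx, neg_pow (c : ℂ), div_neg]
  ring

theorem inv_norm_sub_natCast_le {z : ℂ} {N : ℝ} (hz : z.re < 0) (hN : ‖z‖ ≤ N) (K : ℕ) :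
    ‖z - K‖⁻¹ ≤ N / |z.re| * ‖(-N - K : ℂ)‖⁻¹ := by
  have hre : 0 < |z.re| := abs_pos.2 hz.ne
  have hreN : |z.re| ≤ N := (Complex.abs_re_le_norm z).trans hN
  have hN0 : 0 < N := hre.trans_le hreN
  have hlower : |z.re| + K ≤ ‖z - K‖ := by
    calc |z.re| + K = |(z - K).re| := by
          rw [Complex.sub_re, Complex.natCast_re, abs_of_neg hz, abs_of_neg]
          · ring
          · linarith [K.cast_nonneg (α := ℝ)]
      _ ≤ ‖z - K‖ := Complex.abs_re_le_norm _
  have hnorm : ‖(-N - K : ℂ)‖ = N + K := by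
    rw [← neg_add', norm_neg]
    exact_mod_cast Complex.norm_of_nonneg (r := N + K) (by positivity)
  have hratio : |z.re| * (N + K) / N ≤ ‖z - K‖ := by
    refine ((div_le_iff₀ hN0).2 ?_).trans hlower
    linarith [mul_le_mul_of_nonneg_right hreN K.cast_nonneg]
  calc ‖z - K‖⁻¹ ≤ (|z.re| * (N + K) / N)⁻¹ := inv_anti₀ (by positivity) hratio
    _ = N / |z.re| * ‖(-N - K : ℂ)‖⁻¹ := by rw [hnorm, inv_div, ← div_eq_mul_inv, div_div]

theorem norm_seriesFactor_le {z : ℂ} {N : ℝ} (hz : z.re < 0) (hN : ‖z‖ ≤ N) (c : ℝ) (K k : ℕ) :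
    ‖seriesFactor (z - K) c k‖ ≤ N / |z.re| * ‖seriesFactor (-N - K) (-|c|) k‖ := by
  have hchoose : ‖Ring.choose (z - K) k‖ ≤ ‖Ring.choose (-N - K : ℂ) k‖ := by
    have hzK : ‖z - K‖ ≤ N + K :=
      (norm_sub_le _ _).trans (by rw [Complex.norm_natCast]; gcongr)
    simpa only [Complex.ofReal_add, Complex.ofReal_natCast, neg_add'] using
      norm_choose_le_norm_choose_neg hzK k
  have hinv := inv_norm_sub_natCast_le hz hN K
  calc ‖seriesFactor (z - K) c k‖ = ‖Ring.choose (z - K) k‖ * |c| ^ k * ‖z - K‖⁻¹ := by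
        simp [seriesFactor, div_eq_mul_inv]
    _ ≤ ‖Ring.choose (-N - K : ℂ) k‖ * |c| ^ k * (N / |z.re| * ‖(-N - K : ℂ)‖⁻¹) := by gcongr
    _ = N / |z.re| * ‖seriesFactor (-N - K) (-|c|) k‖ := by
        simp [seriesFactor, div_eq_mul_inv]; ring

theorem IteratedHasSum.const_mul {m : ℕ} {F : (Fin m → ℕ) → ℂ} {S : ℂ} (h : IteratedHasSum m F S)
    (c : ℂ) : IteratedHasSum m (fun k => c * F k) (c * S) := by
  induction m generalizing S with
  | zero => exact congrArg (c * ·) h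
  | succ m ih =>
    obtain ⟨g, hg, hS⟩ := h
    exact ⟨fun l => c * g l, fun l => ih (hg l), hS.mul_left c⟩

theorem IteratedHasSum.tsum_eq {m : ℕ} {F : (Fin m → ℕ) → ℂ} {S : ℂ} (h : IteratedHasSum m F S)
    (hF : Summable F) : ∑' k, F k = S := by
  induction m generalizing S with
  | zero =>
    rw [tsum_eq_single Fin.elim0 fun k hk => absurd (Subsingleton.elim _ _) hk]
    exact h
  | succ m ih =>
    obtain ⟨g, hg, hS⟩ := h
    have hF' := (Fin.snocEquiv fun _ => ℕ).summable_iff.2 hF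
    calc ∑' k, F k = ∑' p, F (Fin.snocEquiv (fun _ => ℕ) p) :=
          ((Fin.snocEquiv fun _ => ℕ).tsum_eq F).symm
      _ = ∑' l, ∑' k : Fin m → ℕ, F (Fin.snoc (α := fun _ => ℕ) k l) := hF'.tsum_prod
      _ = ∑' l, g l := tsum_congr fun l => ih (hg l) (hF'.prod_factor l)
      _ = S := hS.tsum_eq

theorem IteratedHasSum.summable_of_nonneg {m : ℕ} {f : (Fin m → ℕ) → ℝ} {S : ℂ}
    (h : IteratedHasSum m (fun k => (f k : ℂ)) S) (hf : ∀ k, 0 ≤ f k) : Summable f := by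
  induction m generalizing S with
  | zero => exact Summable.of_finite
  | succ m ih =>
    obtain ⟨g, hg, hS⟩ := h
    have hinner : ∀ l, Summable fun k : Fin m → ℕ => f (Fin.snoc (α := fun _ => ℕ) k l) :=
      fun l => ih (hg l) fun k => hf _
    have hg_eq : ∀ l, g l = (∑' k : Fin m → ℕ, f (Fin.snoc (α := fun _ => ℕ) k l) : ℝ) :=
      fun l => by
        rw [Complex.ofReal_tsum]
        exact ((hg l).tsum_eq (Complex.summable_ofReal.2 (hinner l))).symm
    refine (Fin.snocEquiv fun _ => ℕ).summable_iff.1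
      ((summable_prod_of_nonneg fun p => hf _).2 ⟨hinner, ?_⟩)
    exact Complex.summable_ofReal.1 (hS.summable.congr hg_eq)

section Fubini

variable {n : ℕ} {X E : Type*} [MeasurableSpace X] [NormedAddCommGroup E]
  (μ : Fin (n + 1) → Measure X) [∀ i, SigmaFinite (μ i)]

theorem measurePreserving_piFinSuccAbove_last_symm :
    MeasurePreserving (MeasurableEquiv.piFinSuccAbove (fun _ => X) (Fin.last n)).symm
      ((μ (Fin.last n)).prod (Measure.pi fun i : Fin n => μ i.castSucc)) (Measure.pi μ) := by
  have h := (measurePreserving_piFinSuccAbove μ (Fin.last n)).symm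
  simp only [Fin.succAbove_last] at h
  exact h

theorem piFinSuccAbove_last_symm_apply (t : X) (y : Fin n → X) :
    (MeasurableEquiv.piFinSuccAbove (fun _ => X) (Fin.last n)).symm (t, y) =
      Fin.snoc (α := fun _ => X) y t := by
  simp only [MeasurableEquiv.piFinSuccAbove_symm_apply, Fin.insertNthEquiv_last]
  rfl

theorem integrable_pi_succ_iff {f : (Fin (n + 1) → X) → E}
    (hf : AEStronglyMeasurable f (Measure.pi μ)) :
    Integrable f (Measure.pi μ) ↔
      (∀ᵐ y ∂Measure.pi (fun i : Fin n => μ i.castSucc),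
        Integrable (fun t => f (Fin.snoc (α := fun _ => X) y t)) (μ (Fin.last n))) ∧
      Integrable (fun y => ∫ t, ‖f (Fin.snoc (α := fun _ => X) y t)‖ ∂μ (Fin.last n))
        (Measure.pi fun i : Fin n => μ i.castSucc) := by
  have hφ := measurePreserving_piFinSuccAbove_last_symm μ
  rw [← hφ.integrable_comp hf, integrable_prod_iff' (hf.comp_measurePreserving hφ)]
  simp only [Function.comp_apply, piFinSuccAbove_last_symm_apply]

theorem integral_pi_succ [NormedSpace ℝ E] {f : (Fin (n + 1) → X) → E}
    (hf : Integrable f (Measure.pi μ)) :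
    ∫ x, f x ∂Measure.pi μ =
      ∫ y, ∫ t, f (Fin.snoc (α := fun _ => X) y t) ∂μ (Fin.last n)
        ∂Measure.pi (fun i : Fin n => μ i.castSucc) := by
  have hφ := measurePreserving_piFinSuccAbove_last_symm μ
  have hemb := (MeasurableEquiv.piFinSuccAbove (fun _ => X) (Fin.last n)).symm.measurableEmbedding
  rw [← hφ.integral_comp hemb]
  refine (integral_prod_symm _ ((hφ.integrable_comp_emb hemb).2 hf)).trans ?_
  simp only [Function.comp_apply, piFinSuccAbove_last_symm_apply]

end Fubini

theorem integrableOn_Ici_add_cpow {r : ℂ} (hr : r.re < -1) {X b : ℝ} (hX : 0 < X + b) :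
    IntegrableOn (fun t : ℝ => ((X + t : ℝ) : ℂ) ^ r) (Set.Ici b) := by
  have h := integrableOn_Ioi_cpow_of_lt hr hX
  rw [← (measurePreserving_add_left volume X).integrableOn_comp_preimage
    (measurableEmbedding_addLeft X)] at h
  simpa [integrableOn_Ici_iff_integrableOn_Ioi, Function.comp_def] using h

theorem integral_Ici_add_cpow {r : ℂ} (hr : r.re < -1) {X b : ℝ} (hX : 0 < X + b) :
    ∫ t in Set.Ici b, ((X + t : ℝ) : ℂ) ^ r = -((X + b : ℝ) : ℂ) ^ (r + 1) / (r + 1) := by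
  have h := integral_Ioi_cpow_of_lt hr hX
  rw [← (measurePreserving_add_left volume X).setIntegral_preimage_emb
    (measurableEmbedding_addLeft X)] at h
  simpa [integral_Ici_eq_integral_Ioi] using h

theorem integral_Ici_norm_add_cpow {r : ℂ} (hr : r.re < -1) {X b : ℝ} (hX : 0 < X + b) :
    ∫ t in Set.Ici b, ‖((X + t : ℝ) : ℂ) ^ r‖ = -(X + b) ^ (r.re + 1) / (r.re + 1) := by
  have hnorm : ∀ t ∈ Set.Ici b, ‖((X + t : ℝ) : ℂ) ^ r‖ = (X + t) ^ r.re := fun t ht =>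
    Complex.norm_cpow_eq_rpow_re_of_pos (by linarith [Set.mem_Ici.1 ht]) r
  have h := integral_Ioi_rpow_of_lt hr hX
  rw [← (measurePreserving_add_left volume X).setIntegral_preimage_emb
    (measurableEmbedding_addLeft X)] at h
  rw [setIntegral_congr_fun measurableSet_Ici hnorm, integral_Ici_eq_integral_Ioi]
  simpa using h

theorem exists_add_rpow_le_mul_rpow {B c r : ℝ} (hB : 0 < B) (hBc : 0 < B + c) (hr : r ≤ 0) :
    ∃ C, ∀ X, B ≤ X → (X + c) ^ r ≤ C * X ^ r := by
  set δ := min 1 ((B + c) / B)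
  have hδ : 0 < δ := lt_min one_pos (div_pos hBc hB)
  refine ⟨δ ^ r, fun X hX => ?_⟩
  have hX0 : 0 < X := hB.trans_le hX
  have hδX : δ * X ≤ X + c := by
    rcases le_total 0 c with hc | hc
    · calc δ * X ≤ 1 * X := by gcongr; exact min_le_left _ _
        _ ≤ X + c := by linarith
    · calc δ * X ≤ (B + c) / B * X := by gcongr; exact min_le_right _ _
        _ = X + c * (X / B) := by field_simp
        _ ≤ X + c := by
          gcongr
          exact mul_le_of_one_le_right hc ((one_le_div hB).2 hX)
  rw [← Real.mul_rpow hδ.le hX0.le]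
  exact Real.rpow_le_rpow_of_nonpos (mul_pos hδ hX0) hδX hr

theorem sum_Ici_castSucc {M : Type*} [AddCommMonoid M] {n : ℕ} (f : Fin (n + 1) → M) (i : Fin n) :
    ∑ j ∈ Finset.Ici i.castSucc, f j = ∑ j ∈ Finset.Ici i, f j.castSucc + f (Fin.last n) := by
  simp only [← Finset.filter_le_eq_Ici, Finset.sum_filter, Fin.sum_univ_castSucc,
    Fin.castSucc_le_castSucc_iff, Fin.le_last, if_true]

theorem sum_Iio_last {M : Type*} [AddCommMonoid M] {n : ℕ} (f : Fin (n + 1) → M) :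
    ∑ j ∈ Finset.Iio (Fin.last n), f j = ∑ j : Fin n, f j.castSucc := by
  simp only [← Finset.filter_gt_eq_Iio, Finset.sum_filter, Fin.sum_univ_castSucc,
    Fin.castSucc_lt_last, lt_irrefl, if_true, if_false, add_zero]

theorem sum_Iic_last {M : Type*} [AddCommMonoid M] {n : ℕ} (f : Fin (n + 1) → M) :
    ∑ j ∈ Finset.Iic (Fin.last n), f j = ∑ j, f j := by
  rw [← Fin.top_eq_last, Finset.Iic_top]

section Integrand

variable {n : ℕ}

theorem measurableSet_shiftedDomain (α : Fin n → ℝ) : MeasurableSet (shiftedDomain α) :=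
  MeasurableSet.univ_pi fun _ => measurableSet_Ici

theorem mem_shiftedDomain {α x : Fin n → ℝ} : x ∈ shiftedDomain α ↔ ∀ i, α i ≤ x i := by
  simp only [shiftedDomain, Set.mem_univ_pi, Set.mem_Ici]

theorem restrict_shiftedDomain (α : Fin n → ℝ) :
    volume.restrict (shiftedDomain α) =
      Measure.pi fun i => (volume : Measure ℝ).restrict (Set.Ici (α i)) := by
  rw [shiftedDomain, volume_pi, Measure.restrict_pi_pi]

theorem pi_restrict_Ici_castSucc (α : Fin (n + 1) → ℝ) :
    (Measure.pi fun i : Fin n => (volume : Measure ℝ).restrict (Set.Ici (α i.castSucc))) =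
      volume.restrict (shiftedDomain (Fin.init α)) :=
  (restrict_shiftedDomain (Fin.init α)).symm

theorem sum_le_sum_of_mem_shiftedDomain {α y : Fin n → ℝ} (a : Fin n → ℝ)
    (hy : y ∈ shiftedDomain α) : ∑ i, (α i + a i) ≤ ∑ i, (y i + a i) := by
  rw [mem_shiftedDomain] at hy
  gcongr with i
  exact hy i

theorem measurable_shiftedIntegrand (a : Fin n → ℝ) (s : Fin n → ℂ) :
    Measurable (shiftedIntegrand a s) := by
  unfold shiftedIntegrand
  fun_prop

theorem shiftedIntegrand_snoc (a : Fin (n + 1) → ℝ) (s : Fin (n + 1) → ℂ) (y : Fin n → ℝ) (t : ℝ) :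
    shiftedIntegrand a s (Fin.snoc (α := fun _ => ℝ) y t) =
      shiftedIntegrand (Fin.init a) (Fin.init s) y *
        ((∑ i, (y i + Fin.init a i) + a (Fin.last n) + t : ℝ) : ℂ) ^ (-s (Fin.last n)) := by
  unfold shiftedIntegrand
  rw [Fin.prod_univ_castSucc]
  congr 1
  · simp only [Fin.sum_Iic_castSucc, Fin.snoc_castSucc, Fin.init]
  · simp only [sum_Iic_last, Fin.sum_univ_castSucc, Fin.snoc_castSucc, Fin.snoc_last, Fin.init,
      Finset.sum_add_distrib]
    congr 2
    ring

section LastVariable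

variable {a α : Fin (n + 1) → ℝ} {s : Fin (n + 1) → ℂ}

theorem sum_init_add_last_pos_of_mem_shiftedDomain (hpos : 0 < ∑ i, (α i + a i)) {y : Fin n → ℝ}
    (hy : y ∈ shiftedDomain (Fin.init α)) :
    0 < ∑ i, (y i + Fin.init a i) + a (Fin.last n) + α (Fin.last n) := by
  have h := sum_le_sum_of_mem_shiftedDomain (Fin.init a) hy
  rw [Fin.sum_univ_castSucc] at hpos
  simp only [Fin.init] at h ⊢
  linarith

theorem integrableOn_shiftedIntegrand_of_last (hpos : 0 < ∑ i, (α i + a i))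
    (hs : 1 < (s (Fin.last n)).re)
    (h : IntegrableOn (fun y : Fin n → ℝ => shiftedIntegrand (Fin.init a) (Fin.init s) y *
      ((∑ i, (y i + Fin.init a i) + (α (Fin.last n) + a (Fin.last n)) : ℝ) : ℂ) ^
        (1 - s (Fin.last n))) (shiftedDomain (Fin.init α))) :
    IntegrableOn (shiftedIntegrand a s) (shiftedDomain α) := by
  have hr : (-s (Fin.last n)).re < -1 := by rw [Complex.neg_re]; linarith
  have hmem := ae_restrict_mem (μ := volume) (measurableSet_shiftedDomain (Fin.init α))
  rw [IntegrableOn, restrict_shiftedDomain, integrable_pi_succ_iff _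
    (measurable_shiftedIntegrand a s).aestronglyMeasurable]
  simp only [pi_restrict_Ici_castSucc, shiftedIntegrand_snoc, norm_mul, integral_const_mul]
  constructor
  · filter_upwards [hmem] with y hy
    exact (integrableOn_Ici_add_cpow hr
      (sum_init_add_last_pos_of_mem_shiftedDomain hpos hy)).const_mul _
  · refine (h.norm.div_const ((s (Fin.last n)).re - 1)).congr ?_
    filter_upwards [hmem] with y hy
    have hX := sum_init_add_last_pos_of_mem_shiftedDomain hpos hy
    rw [integral_Ici_norm_add_cpow hr hX, add_comm (α _), ← add_assoc (∑ i, _), norm_mul,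
      Complex.norm_cpow_eq_rpow_re_of_pos hX, Complex.neg_re, Complex.sub_re, Complex.one_re,
      neg_add_eq_sub, mul_div_assoc, neg_div, ← div_neg, neg_sub]

theorem shiftedY_eq_integral_last (hpos : 0 < ∑ i, (α i + a i)) (hs : 1 < (s (Fin.last n)).re)
    (h : IntegrableOn (shiftedIntegrand a s) (shiftedDomain α)) :
    shiftedY a α s = -∫ y in shiftedDomain (Fin.init α),
      shiftedIntegrand (Fin.init a) (Fin.init s) y *
        (((∑ i, (y i + Fin.init a i) + (α (Fin.last n) + a (Fin.last n)) : ℝ) : ℂ) ^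
          (1 - s (Fin.last n)) / (1 - s (Fin.last n))) := by
  have hr : (-s (Fin.last n)).re < -1 := by rw [Complex.neg_re]; linarith
  rw [IntegrableOn, restrict_shiftedDomain] at h
  rw [shiftedY, restrict_shiftedDomain, integral_pi_succ _ h, pi_restrict_Ici_castSucc,
    ← integral_neg]
  refine setIntegral_congr_fun (measurableSet_shiftedDomain _) fun y hy => ?_
  simp only [shiftedIntegrand_snoc]
  rw [integral_const_mul, integral_Ici_add_cpow hr
    (sum_init_add_last_pos_of_mem_shiftedDomain hpos hy), neg_add_eq_sub, add_comm (α _),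
    ← add_assoc (∑ i, _), neg_div, mul_neg]

end LastVariable

/-- The exponents left after integrating out the last variable and taking the `l`-th term of the
binomial expansion of the result: the last exponent is merged into the one before it. -/
noncomputable def contractExponent (s : Fin (n + 2) → ℂ) (l : ℕ) : Fin (n + 1) → ℂ :=
  Fin.init s + Pi.single (Fin.last n) (s (Fin.last (n + 1)) - 1 + l)

theorem shiftedIntegrand_contractExponent (a : Fin (n + 1) → ℝ) (s : Fin (n + 2) → ℂ) (l : ℕ)
    {y : Fin (n + 1) → ℝ} (hy : 0 < ∑ i, (y i + a i)) :
    shiftedIntegrand a (contractExponent s l) y = shiftedIntegrand a (Fin.init s) y *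
      ((∑ i, (y i + a i) : ℝ) : ℂ) ^ (1 - s (Fin.last (n + 1)) - l) := by
  unfold shiftedIntegrand
  rw [Fin.prod_univ_castSucc, Fin.prod_univ_castSucc, mul_assoc]
  congr 1
  · refine Finset.prod_congr rfl fun i _ => ?_
    rw [contractExponent, Pi.add_apply, Pi.single_eq_of_ne (Fin.castSucc_lt_last i).ne, add_zero]
  · simp only [sum_Iic_last]
    rw [← Finset.sum_add_distrib, ← Complex.cpow_add _ _ (by exact_mod_cast hy.ne'),
      contractExponent, Pi.add_apply, Pi.single_eq_same]
    congr 1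
    ring

theorem norm_shiftedIntegrand_contractExponent_le (a : Fin (n + 1) → ℝ) (s : Fin (n + 2) → ℂ)
    (l : ℕ) {B : ℝ} (hB : 0 < B) {y : Fin (n + 1) → ℝ} (hy : B ≤ ∑ i, (y i + a i)) :
    ‖shiftedIntegrand a (contractExponent s l) y‖ ≤
      ‖shiftedIntegrand a (contractExponent s 0) y‖ / B ^ l := by
  have hX := hB.trans_le hy
  have hX' : ((∑ i, (y i + a i) : ℝ) : ℂ) ≠ 0 := by exact_mod_cast hX.ne'
  rw [shiftedIntegrand_contractExponent _ _ _ hX, shiftedIntegrand_contractExponent _ _ _ hX,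
    Nat.cast_zero, sub_zero, Complex.cpow_sub _ _ hX', Complex.cpow_natCast, ← mul_div_assoc,
    norm_div, norm_pow, Complex.norm_of_nonneg hX.le]
  gcongr

theorem hasSum_seriesFactor_mul_shiftedIntegrand (a : Fin (n + 2) → ℝ) (s : Fin (n + 2) → ℂ)
    {c : ℝ} {y : Fin (n + 1) → ℝ} (hy : |c| < ∑ i, (y i + Fin.init a i)) :
    HasSum (fun l => seriesFactor (1 - s (Fin.last (n + 1))) c l *
        shiftedIntegrand (Fin.init a) (contractExponent s l) y)
      (shiftedIntegrand (Fin.init a) (Fin.init s) y *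
        (((∑ i, (y i + Fin.init a i) + c : ℝ) : ℂ) ^ (1 - s (Fin.last (n + 1))) /
          (1 - s (Fin.last (n + 1))))) := by
  have hX := (abs_nonneg c).trans_lt hy
  refine ((hasSum_seriesFactor_mul_cpow (1 - s (Fin.last (n + 1))) hy).mul_left
    (shiftedIntegrand (Fin.init a) (Fin.init s) y)).congr_fun fun l => ?_
  rw [shiftedIntegrand_contractExponent _ _ _ hX]
  ring

end Integrand

section Exponent

variable {m : ℕ}

theorem shiftedExponent_eq_sub (s : Fin (m + 1) → ℂ) (k : Fin m → ℕ) (p : Fin (m + 1)) :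
    shiftedExponent s k p = shiftedExponent s 0 p -
      ((∑ i ∈ Finset.univ.filter fun i : Fin m => (p : ℕ) ≤ i, k i : ℕ) : ℂ) := by
  simp [shiftedExponent]

theorem re_shiftedExponent_neg {s : Fin (m + 1) → ℂ} {p : Fin (m + 1)}
    (hs : (shiftedExponent s 0 p).re < 0) (k : Fin m → ℕ) : (shiftedExponent s k p).re < 0 := by
  rw [shiftedExponent_eq_sub, Complex.sub_re, Complex.natCast_re]
  exact (sub_le_self _ (Nat.cast_nonneg _)).trans_lt hs

theorem shiftedExponent_last (s : Fin (m + 1) → ℂ) (k : Fin m → ℕ) :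
    shiftedExponent s k (Fin.last m) = 1 - s (Fin.last m) := by
  rw [shiftedExponent, Finset.filter_false_of_mem fun i _ => by simp, ← Fin.top_eq_last,
    Finset.Ici_top, Finset.sum_singleton, Fin.top_eq_last, Fin.val_last, Finset.sum_empty]
  ring

theorem shiftedExponent_snoc_castSucc (s : Fin (m + 2) → ℂ) (k : Fin m → ℕ) (l : ℕ)
    (p : Fin (m + 1)) :
    shiftedExponent s (Fin.snoc (α := fun _ => ℕ) k l) p.castSucc =
      shiftedExponent (contractExponent s l) k p := by
  simp only [shiftedExponent, contractExponent, sum_Ici_castSucc, Finset.sum_filter,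
    Fin.sum_univ_castSucc, Fin.snoc_castSucc, Fin.snoc_last, Fin.val_castSucc, Fin.val_last,
    Pi.add_apply, Finset.sum_add_distrib, Finset.sum_pi_single',
    Finset.mem_Ici, Fin.le_last, Fin.is_le, if_true, Fin.init]
  push_cast
  ring

theorem one_lt_re_last {s : Fin (m + 1) → ℂ} (hs : ∀ p, (shiftedExponent s 0 p).re < 0) :
    1 < (s (Fin.last m)).re := by
  have h := hs (Fin.last m)
  rw [shiftedExponent_last, Complex.sub_re, Complex.one_re] at h
  linarith

theorem re_shiftedExponent_contractExponent_neg {s : Fin (m + 2) → ℂ}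
    (hs : ∀ p, (shiftedExponent s 0 p).re < 0) (l : ℕ) (p : Fin (m + 1)) :
    (shiftedExponent (contractExponent s l) 0 p).re < 0 := by
  rw [← shiftedExponent_snoc_castSucc]
  exact re_shiftedExponent_neg (hs _) _

end Exponent

theorem integrableOn_shiftedIntegrand_of_contractExponent {n : ℕ} {a α : Fin (n + 2) → ℝ}
    {s : Fin (n + 2) → ℂ} (hinit : 0 < ∑ i, (Fin.init α i + Fin.init a i))
    (hpos : 0 < ∑ i, (α i + a i)) (hs : 1 < (s (Fin.last (n + 1))).re)
    (h : IntegrableOn (shiftedIntegrand (Fin.init a) (contractExponent s 0))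
      (shiftedDomain (Fin.init α))) :
    IntegrableOn (shiftedIntegrand a s) (shiftedDomain α) := by
  refine integrableOn_shiftedIntegrand_of_last hpos hs ?_
  rw [Fin.sum_univ_castSucc] at hpos
  obtain ⟨C, hC⟩ := exists_add_rpow_le_mul_rpow hinit hpos
    (r := 1 - (s (Fin.last (n + 1))).re) (by linarith)
  refine (h.norm.const_mul C).mono' ?_ ?_
  · exact ((measurable_shiftedIntegrand _ _).mul (by fun_prop)).aestronglyMeasurable
  · filter_upwards [ae_restrict_mem (measurableSet_shiftedDomain _)] with y hy
    have hX := sum_le_sum_of_mem_shiftedDomain (Fin.init a) hy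
    have hX0 := hinit.trans_le hX
    rw [shiftedIntegrand_contractExponent _ _ _ hX0, norm_mul, norm_mul, mul_left_comm]
    refine mul_le_mul_of_nonneg_left ?_ (norm_nonneg _)
    rw [Complex.norm_cpow_eq_rpow_re_of_pos (hpos.trans_le (add_le_add_left hX _)),
      Complex.norm_cpow_eq_rpow_re_of_pos hX0]
    simpa using hC _ hX

theorem integrableOn_shiftedIntegrand {m : ℕ} {a α : Fin (m + 1) → ℝ} {s : Fin (m + 1) → ℂ}
    (hpos : ∀ i, 0 < ∑ j ∈ Finset.Iic i, (α j + a j))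
    (hs : ∀ p, (shiftedExponent s 0 p).re < 0) :
    IntegrableOn (shiftedIntegrand a s) (shiftedDomain α) := by
  have hsum : 0 < ∑ i, (α i + a i) := sum_Iic_last (fun i => α i + a i) ▸ hpos (Fin.last m)
  induction m with
  | zero =>
    refine integrableOn_shiftedIntegrand_of_last hsum (one_lt_re_last hs) ?_
    rw [IntegrableOn, restrict_shiftedDomain, Measure.pi_of_empty]
    exact Integrable.of_finite
  | succ m ih =>
    have hinit : ∀ i, 0 < ∑ j ∈ Finset.Iic i, (Fin.init α j + Fin.init a j) := fun i =>
      Fin.sum_Iic_castSucc (fun i => α i + a i) i ▸ hpos i.castSucc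
    have hsum_init : 0 < ∑ i, (Fin.init α i + Fin.init a i) :=
      sum_Iic_last (fun i => Fin.init α i + Fin.init a i) ▸ hinit (Fin.last m)
    exact integrableOn_shiftedIntegrand_of_contractExponent hsum_init hsum (one_lt_re_last hs)
      (ih hinit (re_shiftedExponent_contractExponent_neg hs 0) hsum_init)

theorem shiftedY_fin_one {a α : Fin 1 → ℝ} {s : Fin 1 → ℂ} (hpos : 0 < α 0 + a 0)
    (hs : 1 < (s 0).re) :
    shiftedY a α s = -(((α 0 + a 0 : ℝ) : ℂ) ^ (1 - s 0) / (1 - s 0)) := by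
  have hint : IntegrableOn (shiftedIntegrand a s) (shiftedDomain α) :=
    integrableOn_shiftedIntegrand
      (fun i : Fin 1 => by rwa [Subsingleton.elim i (Fin.last 0), sum_Iic_last, Fin.sum_univ_one])
      (by simpa [Fin.forall_fin_one, shiftedExponent] using hs)
  rw [shiftedY_eq_integral_last (n := 0) (by simpa using hpos) hs hint, restrict_shiftedDomain,
    Measure.pi_of_empty, integral_dirac]
  simp [shiftedIntegrand]

theorem summable_integral_norm_seriesFactor_mul {m : ℕ} {a α : Fin (m + 2) → ℝ}
    {s : Fin (m + 2) → ℂ} {c : ℝ} (hc : |c| < ∑ i, (Fin.init α i + Fin.init a i))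
    (hint : ∀ l, IntegrableOn (shiftedIntegrand (Fin.init a) (contractExponent s l))
      (shiftedDomain (Fin.init α))) (E : ℂ) :
    Summable fun l => ∫ y in shiftedDomain (Fin.init α),
      ‖seriesFactor E c l * shiftedIntegrand (Fin.init a) (contractExponent s l) y‖ := by
  set B := ∑ i, (Fin.init α i + Fin.init a i)
  set J := fun y => ‖shiftedIntegrand (Fin.init a) (contractExponent s 0) y‖
  have hbound : ∀ l, ∫ y in shiftedDomain (Fin.init α),
      ‖seriesFactor E c l * shiftedIntegrand (Fin.init a) (contractExponent s l) y‖ ≤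
        ‖seriesFactor E c l‖ / B ^ l * ∫ y in shiftedDomain (Fin.init α), J y := fun l => by
    rw [← integral_const_mul]
    refine setIntegral_mono_on ((hint l).const_mul _).norm ((hint 0).norm.const_mul _)
      (measurableSet_shiftedDomain _) fun y hy => ?_
    rw [norm_mul, div_mul_eq_mul_div, mul_div_assoc]
    gcongr
    exact norm_shiftedIntegrand_contractExponent_le _ _ _ ((abs_nonneg c).trans_lt hc)
      (sum_le_sum_of_mem_shiftedDomain _ hy)
  exact Summable.of_nonneg_of_le (fun l => integral_nonneg fun y => norm_nonneg _) hbound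
    ((summable_norm_seriesFactor_div_pow E hc).mul_right _)

theorem hasSum_seriesFactor_mul_shiftedY {m : ℕ} {a α : Fin (m + 2) → ℝ} {s : Fin (m + 2) → ℂ}
    (hpos : ∀ i, 0 < ∑ j ∈ Finset.Iic i, (α j + a j))
    (hlast : |α (Fin.last (m + 1)) + a (Fin.last (m + 1))| <
      ∑ i, (Fin.init α i + Fin.init a i))
    (hs : ∀ p, (shiftedExponent s 0 p).re < 0) :
    HasSum (fun l => seriesFactor (1 - s (Fin.last (m + 1)))
        (α (Fin.last (m + 1)) + a (Fin.last (m + 1))) l *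
        shiftedY (Fin.init a) (Fin.init α) (contractExponent s l))
      (-shiftedY a α s) := by
  set c := α (Fin.last (m + 1)) + a (Fin.last (m + 1))
  have hint : ∀ l, IntegrableOn (shiftedIntegrand (Fin.init a) (contractExponent s l))
      (shiftedDomain (Fin.init α)) := fun l =>
    integrableOn_shiftedIntegrand
      (fun i => Fin.sum_Iic_castSucc (fun i => α i + a i) i ▸ hpos i.castSucc)
      (re_shiftedExponent_contractExponent_neg hs l)
  have hsum := hasSum_integral_of_summable_integral_norm (fun l => (hint l).const_mul _)
    (summable_integral_norm_seriesFactor_mul hlast hint (1 - s (Fin.last (m + 1))))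
  simp only [integral_const_mul] at hsum
  suffices h : ∫ y in shiftedDomain (Fin.init α), ∑' l,
      seriesFactor (1 - s (Fin.last (m + 1))) c l *
        shiftedIntegrand (Fin.init a) (contractExponent s l) y = -shiftedY a α s by
    rwa [h] at hsum
  rw [shiftedY_eq_integral_last (sum_Iic_last (fun i => α i + a i) ▸ hpos (Fin.last (m + 1)))
    (one_lt_re_last hs) (integrableOn_shiftedIntegrand hpos hs), neg_neg]
  refine setIntegral_congr_fun (measurableSet_shiftedDomain _) fun y hy => ?_
  have hX := hlast.trans_le (sum_le_sum_of_mem_shiftedDomain (Fin.init a) hy)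
  exact (hasSum_seriesFactor_mul_shiftedIntegrand a s hX).tsum_eq

theorem shiftedTerm_eq_mul_prod_seriesFactor {m : ℕ} (a α : Fin (m + 1) → ℝ) (s : Fin (m + 1) → ℂ)
    (k : Fin m → ℕ) :
    shiftedTerm a α s k =
      ((α 0 + a 0 : ℝ) : ℂ) ^ shiftedExponent s k 0 / shiftedExponent s k 0 *
        ∏ j : Fin m, seriesFactor (shiftedExponent s k j.succ) (α j.succ + a j.succ) (k j) :=
  rfl

theorem shiftedTerm_snoc {m : ℕ} (a α : Fin (m + 2) → ℝ) (s : Fin (m + 2) → ℂ) (k : Fin m → ℕ)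
    (l : ℕ) :
    shiftedTerm a α s (Fin.snoc (α := fun _ => ℕ) k l) =
      seriesFactor (1 - s (Fin.last (m + 1)))
        (α (Fin.last (m + 1)) + a (Fin.last (m + 1))) l *
          shiftedTerm (Fin.init a) (Fin.init α) (contractExponent s l) k := by
  simp only [shiftedTerm_eq_mul_prod_seriesFactor, Fin.prod_univ_castSucc, Fin.succ_last,
    shiftedExponent_last, Fin.succ_castSucc, shiftedExponent_snoc_castSucc, Fin.snoc_castSucc,
    Fin.snoc_last, ← Fin.castSucc_zero, Fin.init]
  ring

theorem sum_Iic_pos_of_abs_lt {m : ℕ} {c : Fin (m + 1) → ℝ} (h0 : 0 < c 0)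
    (hc : ∀ i : Fin (m + 1), 0 < (i : ℕ) → |c i| < ∑ j ∈ Finset.Iio i, c j) (i : Fin (m + 1)) :
    0 < ∑ j ∈ Finset.Iic i, c j := by
  rw [← Finset.sum_Iio_add_eq_sum_Iic]
  rcases eq_or_ne i 0 with rfl | hi
  · rwa [show Finset.Iio (0 : Fin (m + 1)) = ∅ from Finset.Iio_bot, Finset.sum_empty, zero_add]
  · linarith [(abs_lt.1 (hc i (Fin.pos_iff_ne_zero.2 hi))).1]

theorem iteratedHasSum_shiftedTerm {m : ℕ} {a α : Fin (m + 1) → ℝ} (h0 : 0 < α 0 + a 0)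
    (hαa : ∀ i : Fin (m + 1), 0 < (i : ℕ) → |α i + a i| < ∑ j ∈ Finset.Iio i, (α j + a j))
    {s : Fin (m + 1) → ℂ} (hs : ∀ p, (shiftedExponent s 0 p).re < 0) :
    IteratedHasSum m (shiftedTerm a α s) ((-1) ^ (m + 1) * shiftedY a α s) := by
  induction m with
  | zero =>
    have hexp : shiftedExponent s Fin.elim0 0 = 1 - s 0 := shiftedExponent_last s Fin.elim0
    rw [shiftedY_fin_one h0 (one_lt_re_last hs), IteratedHasSum, shiftedTerm, hexp,
      Fin.prod_univ_zero]
    ring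
  | succ m ih =>
    refine ⟨fun l => seriesFactor (1 - s (Fin.last (m + 1)))
        (α (Fin.last (m + 1)) + a (Fin.last (m + 1))) l *
          ((-1) ^ (m + 1) * shiftedY (Fin.init a) (Fin.init α) (contractExponent s l)),
      fun l => ?_, ?_⟩
    · simp only [shiftedTerm_snoc]
      refine (ih h0 (fun i hi => ?_) (re_shiftedExponent_contractExponent_neg hs l)).const_mul _
      have h := hαa i.castSucc hi
      rwa [Fin.sum_Iio_castSucc] at h
    · have hlast := hαa (Fin.last (m + 1)) (Nat.succ_pos m)
      rw [sum_Iio_last] at hlast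
      have hsum := (hasSum_seriesFactor_mul_shiftedY (sum_Iic_pos_of_abs_lt h0 hαa) hlast
        hs).mul_left ((-1) ^ (m + 1))
      rw [pow_succ _ (m + 1), mul_neg_one, neg_mul, ← mul_neg]
      exact hsum.congr_fun fun l => mul_left_comm _ _ _

section AbsoluteConvergence

variable {m : ℕ} {a α a' α' : Fin (m + 1) → ℝ} {s s' : Fin (m + 1) → ℂ} {N : ℝ}

theorem norm_shiftedTerm_le (h0 : 0 < α 0 + a 0) (hs : ∀ p, (shiftedExponent s 0 p).re < 0)
    (hN : ∀ p, ‖shiftedExponent s 0 p‖ ≤ N) (hs' : ∀ p, shiftedExponent s' 0 p = -N)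
    (hc0 : α' 0 + a' 0 = α 0 + a 0)
    (hc : ∀ j : Fin m, α' j.succ + a' j.succ = -|α j.succ + a j.succ|) (k : Fin m → ℕ) :
    ‖shiftedTerm a α s k‖ ≤
      (α 0 + a 0) ^ ((shiftedExponent s 0 0).re + N) *
        (∏ p, N / |(shiftedExponent s 0 p).re|) * ‖shiftedTerm a' α' s' k‖ := by
  have hN0 : 0 ≤ N := (norm_nonneg _).trans (hN 0)
  have hhead : ‖((α 0 + a 0 : ℝ) : ℂ) ^ shiftedExponent s k 0 / shiftedExponent s k 0‖ ≤
      (α 0 + a 0) ^ ((shiftedExponent s 0 0).re + N) * (N / |(shiftedExponent s 0 0).re|) *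
        ‖((α 0 + a 0 : ℝ) : ℂ) ^ shiftedExponent s' k 0 / shiftedExponent s' k 0‖ := by
    rw [shiftedExponent_eq_sub s, shiftedExponent_eq_sub s', hs', norm_div, norm_div,
      Complex.norm_cpow_eq_rpow_re_of_pos h0, Complex.norm_cpow_eq_rpow_re_of_pos h0,
      div_eq_mul_inv, div_eq_mul_inv (_ ^ _), mul_mul_mul_comm, ← Real.rpow_add h0]
    simp only [Complex.sub_re, Complex.neg_re, Complex.ofReal_re]
    rw [add_sub, add_neg_cancel_right]
    gcongr
    exact inv_norm_sub_natCast_le (hs 0) (hN 0) _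
  have hfactor : ∀ j : Fin m,
      ‖seriesFactor (shiftedExponent s k j.succ) (α j.succ + a j.succ) (k j)‖ ≤
        N / |(shiftedExponent s 0 j.succ).re| *
          ‖seriesFactor (shiftedExponent s' k j.succ) (α' j.succ + a' j.succ) (k j)‖ := fun j => by
    rw [shiftedExponent_eq_sub s, shiftedExponent_eq_sub s', hs', hc]
    exact norm_seriesFactor_le (hs _) (hN _) _ _ _
  rw [shiftedTerm_eq_mul_prod_seriesFactor, shiftedTerm_eq_mul_prod_seriesFactor a', norm_mul,
    norm_mul, norm_prod, norm_prod, Fin.prod_univ_succ, hc0]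
  refine (mul_le_mul hhead (Finset.prod_le_prod (fun _ _ => norm_nonneg _) fun j _ => hfactor j)
    (by positivity) (by positivity)).trans_eq ?_
  rw [Finset.prod_mul_distrib]
  ring

theorem shiftedTerm_eq_neg_one_pow_mul_norm (h0 : 0 < α 0 + a 0)
    (hc : ∀ j : Fin m, α j.succ + a j.succ ≤ 0) (hN : 0 ≤ N)
    (hs : ∀ p, shiftedExponent s 0 p = -N) (k : Fin m → ℕ) :
    shiftedTerm a α s k = (-1) ^ (m + 1) * ‖shiftedTerm a α s k‖ := by
  have hexp : ∀ p, ∃ x : ℝ, 0 ≤ x ∧ shiftedExponent s k p = -x := fun p =>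
    ⟨N + (∑ i ∈ Finset.univ.filter fun i : Fin m => (p : ℕ) ≤ i, k i : ℕ), by positivity, by
      rw [shiftedExponent_eq_sub, hs]; push_cast; ring⟩
  have hhead : ((α 0 + a 0 : ℝ) : ℂ) ^ shiftedExponent s k 0 / shiftedExponent s k 0 =
      -‖((α 0 + a 0 : ℝ) : ℂ) ^ shiftedExponent s k 0 / shiftedExponent s k 0‖ := by
    obtain ⟨x, hx, hxk⟩ := hexp 0
    rw [hxk, norm_div, norm_neg, Complex.norm_of_nonneg hx, Complex.norm_cpow_eq_rpow_re_of_pos h0,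
      Complex.neg_re, Complex.ofReal_re, ← Complex.ofReal_neg, ← Complex.ofReal_cpow h0.le,
      Complex.ofReal_neg, div_neg, Complex.ofReal_div]
  have hfactor : ∀ j : Fin m,
      seriesFactor (shiftedExponent s k j.succ) (α j.succ + a j.succ) (k j) =
        -‖seriesFactor (shiftedExponent s k j.succ) (α j.succ + a j.succ) (k j)‖ := fun j => by
    obtain ⟨x, hx, hxk⟩ := hexp j.succ
    rw [hxk, ← neg_neg (α j.succ + a j.succ)]
    exact_mod_cast seriesFactor_neg_eq_neg_norm hx (neg_nonneg.2 (hc j)) (k j)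
  rw [shiftedTerm_eq_mul_prod_seriesFactor, norm_mul, norm_prod]
  refine (congrArg₂ (· * ·) hhead (Finset.prod_congr rfl fun j _ => hfactor j)).trans ?_
  rw [Finset.prod_neg, Finset.card_univ, Fintype.card_fin, pow_succ]
  push_cast
  ring

end AbsoluteConvergence

theorem shiftedExponent_one_add_single_last (m : ℕ) (N : ℂ) (p : Fin (m + 1)) :
    shiftedExponent (1 + Pi.single (Fin.last m) N) 0 p = -N := by
  simp only [shiftedExponent, Pi.add_apply, Pi.one_apply, Finset.sum_add_distrib,
    Finset.sum_const, Fin.card_Ici, Finset.sum_pi_single', Finset.mem_Ici, Fin.le_last, if_true,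
    Pi.zero_apply, Nat.cast_zero, smul_zero, nsmul_one, Nat.cast_sub p.is_lt.le]
  push_cast
  ring

theorem abs_lt_sum_Iio_of_sum_pos {m : ℕ} {c : Fin (m + 1) → ℝ} (hc : ∀ j : Fin m, c j.succ ≤ 0)
    (hsum : 0 < ∑ i, c i) (i : Fin (m + 1)) (hi : 0 < (i : ℕ)) :
    |c i| < ∑ j ∈ Finset.Iio i, c j := by
  have hnonpos : ∀ j : Fin (m + 1), j ≠ 0 → c j ≤ 0 := fun j hj => by
    obtain ⟨l, rfl⟩ := Fin.exists_succ_eq.2 hj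
    exact hc l
  have hle : ∑ j, c j ≤ ∑ j ∈ Finset.Iic i, c j := by
    rw [← Finset.sum_add_sum_compl (Finset.Iic i)]
    refine add_le_of_nonpos_right (Finset.sum_nonpos fun j hj => hnonpos j ?_)
    rintro rfl
    simp at hj
  rw [← Finset.sum_Iio_add_eq_sum_Iic] at hle
  rw [abs_of_nonpos (hnonpos i (Fin.pos_iff_ne_zero.1 hi))]
  linarith

theorem summable_norm_shiftedTerm {m : ℕ} {a α : Fin (m + 1) → ℝ} {s : Fin (m + 1) → ℂ}
    (hs : ∀ p, (shiftedExponent s 0 p).re < 0)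
    (hlt : ∑ j : Fin m, |α j.succ + a j.succ| < α 0 + a 0) :
    Summable fun k => ‖shiftedTerm a α s k‖ := by
  have h0 : 0 < α 0 + a 0 := (Finset.sum_nonneg fun j _ => abs_nonneg _).trans_lt hlt
  set N := ∑ p, ‖shiftedExponent s 0 p‖
  have hN : ∀ p, ‖shiftedExponent s 0 p‖ ≤ N := fun p =>
    Finset.single_le_sum (f := fun q => ‖shiftedExponent s 0 q‖) (fun q _ => norm_nonneg _)
      (Finset.mem_univ p)
  have hNpos : 0 < N := (abs_pos.2 (hs 0).ne).trans_le ((Complex.abs_re_le_norm _).trans (hN 0))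
  let α' : Fin (m + 1) → ℝ := Fin.cons (α 0 + a 0) fun j => -|α j.succ + a j.succ|
  let s' : Fin (m + 1) → ℂ := 1 + Pi.single (Fin.last m) (N : ℂ)
  have hs' : ∀ p, shiftedExponent s' 0 p = -N := shiftedExponent_one_add_single_last m N
  have hα' : ∀ j : Fin m, α' j.succ + (0 : Fin (m + 1) → ℝ) j.succ ≤ 0 := fun j => by
    simp [α']
  have hα'0 : α' 0 + (0 : Fin (m + 1) → ℝ) 0 = α 0 + a 0 := by simp [α']
  have hiter := iteratedHasSum_shiftedTerm (s := s') (hα'0 ▸ h0)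
    (abs_lt_sum_Iio_of_sum_pos hα' (by simpa [α', Fin.sum_univ_succ] using hlt))
    (fun p => by simpa [hs' p] using hNpos)
  have hsign := shiftedTerm_eq_neg_one_pow_mul_norm (hα'0 ▸ h0) hα' hNpos.le hs'
  have hsum : Summable fun k => ‖shiftedTerm 0 α' s' k‖ :=
    IteratedHasSum.summable_of_nonneg (by
      convert hiter.const_mul ((-1) ^ (m + 1)) using 2 with k
      rw [hsign k, ← mul_assoc, ← mul_pow]
      simp) fun k => norm_nonneg _
  exact Summable.of_nonneg_of_le (fun k => norm_nonneg _)
    (norm_shiftedTerm_le h0 hs hN hs' hα'0 fun j => by simp [α']) (hsum.mul_left _)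

theorem re_shiftedExponent_zero_neg_iff {m : ℕ} (s : Fin (m + 1) → ℂ) (p : Fin (m + 1)) :
    (shiftedExponent s 0 p).re < 0 ↔ (m : ℝ) + 1 - (p : ℕ) < (∑ i ∈ Finset.Ici p, s i).re := by
  simp only [shiftedExponent, Pi.zero_apply, Nat.cast_zero, Finset.sum_const_zero, sub_zero,
    Complex.add_re, Complex.neg_re, Complex.sub_re, Complex.natCast_re, Complex.one_re]
  rw [neg_add_eq_sub, sub_neg]

theorem shifted_integral_function_series_expansion_general
    (m : ℕ) (α a : Fin (m + 1) → ℝ) (h0 : 0 < α 0 + a 0)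
    (hαa : ∀ i : Fin (m + 1), 0 < (i : ℕ) → |α i + a i| < ∑ j ∈ Finset.Iio i, (α j + a j))
    (s : Fin (m + 1) → ℂ)
    (hs : ∀ j : Fin (m + 1), (m : ℝ) + 1 - (j : ℕ) < (∑ i ∈ Finset.Ici j, s i).re) :
    IntegrableOn (shiftedIntegrand a s) (shiftedDomain α) ∧
    (∃ S : ℂ, IteratedHasSum m (shiftedTerm a α s) S ∧
      shiftedY a α s = (-1 : ℂ) ^ (m + 1) * S) ∧
    (∑ j : Fin m, |α j.succ + a j.succ| < α 0 + a 0 →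
      Summable (fun k : Fin m → ℕ => ‖shiftedTerm a α s k‖) ∧
      shiftedY a α s = (-1 : ℂ) ^ (m + 1) * ∑' k : Fin m → ℕ, shiftedTerm a α s k) := by
  simp only [← re_shiftedExponent_zero_neg_iff] at hs
  have hiter := iteratedHasSum_shiftedTerm h0 hαa hs
  have hsign : shiftedY a α s = (-1) ^ (m + 1) * ((-1) ^ (m + 1) * shiftedY a α s) := by
    rw [← mul_assoc, ← mul_pow, neg_one_mul, neg_neg, one_pow, one_mul]
  refine ⟨integrableOn_shiftedIntegrand (sum_Iic_pos_of_abs_lt h0 hαa) hs, ⟨_, hiter, hsign⟩,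
    fun hlt => ?_⟩
  have hsum := summable_norm_shiftedTerm hs hlt
  exact ⟨hsum, by rwa [hiter.tsum_eq hsum.of_norm]⟩

/-- Here `n = m + 1 ≥ 2`, and the indices `1, …, n` are `0, …, m` in `Fin (m + 1)`. -/
theorem shifted_integral_function_series_expansion
    (m : ℕ) (hm : 1 ≤ m) (α a : Fin (m + 1) → ℝ) (hα : ∀ i, 0 < α i) (ha : ∀ i, 0 ≤ a i)
    (hαa : ∀ i : Fin (m + 1), 0 < (i : ℕ) → α i + a i < ∑ j ∈ Finset.Iio i, (α j + a j))
    (s : Fin (m + 1) → ℂ)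
    (hs : ∀ j : Fin (m + 1), (m : ℝ) + 1 - (j : ℕ) < (∑ i ∈ Finset.Ici j, s i).re) :
    IntegrableOn (shiftedIntegrand a s) (shiftedDomain α) ∧
    (∃ S : ℂ, IteratedHasSum m (shiftedTerm a α s) S ∧
      shiftedY a α s = (-1 : ℂ) ^ (m + 1) * S) ∧
    (∑ j : Fin m, (α j.succ + a j.succ) < α 0 + a 0 →
      Summable (fun k : Fin m → ℕ => ‖shiftedTerm a α s k‖) ∧
      shiftedY a α s = (-1 : ℂ) ^ (m + 1) * ∑' k : Fin m → ℕ, shiftedTerm a α s k) := by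
  have habs : ∀ i, |α i + a i| = α i + a i := fun i => abs_of_pos (by linarith [hα i, ha i])
  simpa only [habs] using shifted_integral_function_series_expansion_general m α a
    (by linarith [hα 0, ha 0]) (by simpa only [habs] using hαa) s hs
end
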